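/- arXiv:0903.1442 — 6 statements merged into one kernel-verified Lean document; each statement's English description precedes it below -/
import Mathlib

section
/- If p is an exponential polynomial in n variables over ℂ and p(z) ≠ 0 for every z ∈ ℂⁿ, then there exists an exponential polynomial g in n variables over ℂ such that p(z) = exp(g(z)) for all z ∈ ℂⁿ. -/
/-- `IsExpPoly n p` says that `p : (Fin n → ℂ) → ℂ` belongs to the smallest subring of
the ring of functions `(Fin n → ℂ) → ℂ` containing all constant functions and all
coordinate projections, and closed under post-composition with the complex exponential. -/
inductive IsExpPoly (n : ℕ) : ((Fin n → ℂ) → ℂ) → Prop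
  | const (c : ℂ) : IsExpPoly n (fun _ => c)
  | coord (i : Fin n) : IsExpPoly n (fun z => z i)
  | add {f g : (Fin n → ℂ) → ℂ} : IsExpPoly n f → IsExpPoly n g → IsExpPoly n (f + g)
  | neg {f : (Fin n → ℂ) → ℂ} : IsExpPoly n f → IsExpPoly n (-f)
  | mul {f g : (Fin n → ℂ) → ℂ} : IsExpPoly n f → IsExpPoly n g → IsExpPoly n (f * g)
  | exp {f : (Fin n → ℂ) → ℂ} : IsExpPoly n f → IsExpPoly n (fun z => Complex.exp (f z))

/-!
Filter the entire functions by growth: level `0` is the constants and level `k + 1` the functions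
bounded by `k` exponentials iterated on a polynomial in `‖z‖`. Applying `exp` raises the level by
one and, conversely, if `b` and `b * exp w` lie in level `k + 1` with `b ≠ 0`, then `w` lies in
level `k`: Jensen's formula bounds `log ‖b‖` from below on average, Poisson's formula turns this
into an upper bound for `re w`, and Borel–Carathéodory into one for `‖w‖`. Two facts follow. A
zero-free function of level `k + 1` is `exp h` with `h` of level `k`; and (Borel) exponentials whose
exponents are pairwise distinct modulo level `k` are linearly independent over level `k + 1`.

Let now `p = exp h` be a zero-free exponential polynomial, `p = ∑ cᵢ exp gᵢ` with `gᵢ` of smaller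
exponential depth. By Borel only the `gᵢ` congruent to `h` modulo lower growth matter. The
independence also shows that an exponential polynomial of depth `k + 1` whose growth level is `k`
has depth `k`. Hence dividing by one of the `exp gᵢ` lowers the depth of `p`, and induction on the
depth applies to the quotient.
-/

open Filter Metric Set Real Asymptotics Bornology
open scoped Topology

namespace HensonRubel

section OneVariable

variable {c w : ℂ} {R : ℝ}

lemma circleAverage_le_circleAverage_of_eventuallyLE {u v : ℂ → ℝ} (hR : R ≠ 0)
    (hu : CircleIntegrable u c R) (hv : CircleIntegrable v c R)
    (huv : u ≤ᶠ[codiscreteWithin (sphere c |R|)] v) :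
    circleAverage u c R ≤ circleAverage v c R := by
  have hmin : u =ᶠ[codiscreteWithin (sphere c |R|)] fun z ↦ min (u z) (v z) :=
    huv.mono fun z hz ↦ (min_eq_left hz).symm
  calc circleAverage u c R = circleAverage (fun z ↦ min (u z) (v z)) c R :=
        circleAverage_congr_codiscreteWithin hmin hR
    _ ≤ circleAverage v c R :=
        circleAverage_mono (hu.congr_codiscreteWithin hmin) hv fun z _ ↦ min_le_right _ _

lemma log_norm_le_circleAverage {f : ℂ → ℂ} (hR : 0 < R)
    (hf : AnalyticOnNhd ℂ f (closedBall c R)) (hfc : f c ≠ 0) :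
    log ‖f c‖ ≤ circleAverage (log ‖f ·‖) c R := by
  rw [← abs_of_pos hR] at hf
  rw [hf.circleAverage_log_norm hR.ne' hfc]
  refine le_add_of_nonneg_left (finsum_nonneg fun u ↦ ?_)
  by_cases hu : u ∈ closedBall c |R|
  · have hdiv : 0 ≤ MeromorphicOn.divisor f (closedBall c |R|) u :=
      MeromorphicOn.AnalyticOnNhd.divisor_nonneg hf u
    refine mul_nonneg (mod_cast hdiv) ?_
    rcases eq_or_ne u c with rfl | huc
    · simp
    · have hcu : 0 < ‖c - u‖ := norm_pos_iff.2 (sub_ne_zero.2 huc.symm)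
      have hcuR : ‖c - u‖ ≤ R := by
        rwa [abs_of_pos hR, mem_closedBall', dist_eq_norm] at hu
      exact log_nonneg ((one_le_div hcu).2 hcuR)
  · simp [Function.locallyFinsuppWithin.apply_eq_zero_of_notMem _ hu]

lemma le_mul_circleAverage_of_harmonicOnNhd {u v : ℂ → ℝ}
    (hu : InnerProductSpace.HarmonicOnNhd u (closedBall c R)) (hv : CircleIntegrable v c R)
    (huv : u ≤ᶠ[codiscreteWithin (sphere c |R|)] v)
    (hv0 : 0 ≤ᶠ[codiscreteWithin (sphere c |R|)] v) (hw : w ∈ ball c R) :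
    u w ≤ (R + ‖w - c‖) / (R - ‖w - c‖) * circleAverage v c R := by
  have hR : 0 < R := pos_of_mem_ball hw
  have hwR : ‖w - c‖ < R := by rwa [← dist_eq_norm]
  have huc : ContinuousOn u (sphere c |R|) := by
    rw [abs_of_pos hR]
    exact hu.continuousOn.mono sphere_subset_closedBall
  have hkernel : CircleIntegrable ((Complex.re ∘ herglotzRieszKernel c w) • u) c R :=
    ((Complex.continuous_re.comp_continuousOn
      (continuousOn_herglotzRieszKernel_sphere hw)).smul huc).circleIntegrable'
  rw [← hu.circleAverage_re_herglotzRieszKernel_smul hw, ← smul_eq_mul, ← circleAverage_smul]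
  refine circleAverage_le_circleAverage_of_eventuallyLE hR.ne' hkernel hv.const_smul ?_
  filter_upwards [huv, hv0, self_mem_codiscreteWithin _] with z hz hz0 hzR
  rw [abs_of_pos hR] at hzR
  have hkernel_nonneg : 0 ≤ (herglotzRieszKernel c w z).re :=
    (div_nonneg (by linarith) (by positivity)).trans (le_re_herglotzRieszKernel hzR hw)
  calc (herglotzRieszKernel c w z).re * u z ≤ (herglotzRieszKernel c w z).re * v z := by gcongr
    _ ≤ (R + ‖w - c‖) / (R - ‖w - c‖) * v z :=
        mul_le_mul_of_nonneg_right (re_herglotzRieszKernel_le hzR hw) hz0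

lemma re_le_of_norm_mul_cexp_le {b f : ℂ → ℂ} {L : ℝ}
    (hb : AnalyticOnNhd ℂ b (closedBall c R)) (hf : AnalyticOnNhd ℂ f (closedBall c R))
    (hbc : b c ≠ 0) (hbL : ∀ z ∈ closedBall c R, ‖b z‖ ≤ exp L)
    (hbfL : ∀ z ∈ closedBall c R, ‖b z * Complex.exp (f z)‖ ≤ exp L) (hw : w ∈ ball c R) :
    (f w).re ≤ (R + ‖w - c‖) / (R - ‖w - c‖) * (L - log ‖b c‖) := by
  have hR : 0 < R := pos_of_mem_ball hw
  have hwR : ‖w - c‖ < R := by rwa [← dist_eq_norm]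
  have hsphere : sphere c |R| ⊆ closedBall c R := by
    rw [abs_of_pos hR]
    exact sphere_subset_closedBall
  have hlog : CircleIntegrable (log ‖b ·‖) c R :=
    MeromorphicOn.circleIntegrable_log_norm fun z hz ↦ (hb z (hsphere hz)).meromorphicAt
  have hne : ∀ᶠ z in codiscreteWithin (sphere c |R|), b z ≠ 0 ∧ z ∈ closedBall c R := by
    have hmem := hb.preimage_zero_mem_codiscreteWithin hbc (mem_closedBall_self hR.le)
      ((convex_closedBall c R).isConnected (nonempty_closedBall.2 hR.le))
    filter_upwards [codiscreteWithin_mono hsphere hmem, self_mem_codiscreteWithin _] with z hz hzR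
    exact ⟨hz, hsphere hzR⟩
  refine (le_mul_circleAverage_of_harmonicOnNhd (v := fun z ↦ L - log ‖b z‖)
    (fun z hz ↦ (hf z hz).harmonicAt_re) ((circleIntegrable_const _ _ _).sub hlog)
    ?_ ?_ hw).trans ?_
  · filter_upwards [hne] with z ⟨hz, hzR⟩
    have h := log_le_log (norm_pos_iff.2 (mul_ne_zero hz (Complex.exp_ne_zero _))) (hbfL z hzR)
    rw [norm_mul, Complex.norm_exp, log_mul (norm_ne_zero_iff.2 hz) (exp_ne_zero _), log_exp,
      log_exp] at h
    linarith
  · filter_upwards [hne] with z ⟨hz, hzR⟩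
    exact sub_nonneg.2 ((log_le_iff_le_exp (norm_pos_iff.2 hz)).2 (hbL z hzR))
  · have havg : circleAverage (fun z ↦ L - log ‖b z‖) c R
        = L - circleAverage (log ‖b ·‖) c R := by
      rw [circleAverage_fun_sub (circleIntegrable_const _ _ _) hlog, circleAverage_const]
    rw [havg]
    have : 0 < R - ‖w - c‖ := sub_pos.2 hwR
    gcongr
    exact log_norm_le_circleAverage hR hb hbc

lemma norm_le_of_norm_mul_cexp_le {b f : ℂ → ℂ} {L : ℝ} (hR : 0 < R)
    (hb : AnalyticOnNhd ℂ b (closedBall 0 (4 * R)))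
    (hf : AnalyticOnNhd ℂ f (closedBall 0 (4 * R))) (hb0 : b 0 ≠ 0)
    (hbL : ∀ z ∈ closedBall 0 (4 * R), ‖b z‖ ≤ exp L)
    (hbfL : ∀ z ∈ closedBall 0 (4 * R), ‖b z * Complex.exp (f z)‖ ≤ exp L)
    (hw : w ∈ closedBall 0 R) :
    ‖f w‖ ≤ 2 * (3 * (L - log ‖b 0‖) + 1) + 3 * ‖f 0‖ := by
  have hlog : log ‖b 0‖ ≤ L :=
    (log_le_iff_le_exp (norm_pos_iff.2 hb0)).2 (hbL 0 (mem_closedBall_self (by positivity)))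
  have hM : 0 < 3 * (L - log ‖b 0‖) + 1 := by linarith
  have hre : ∀ z ∈ ball 0 (2 * R), (f z).re ≤ 3 * (L - log ‖b 0‖) + 1 := by
    intro z hz
    rw [mem_ball_zero_iff] at hz
    have h := re_le_of_norm_mul_cexp_le hb hf hb0 hbL hbfL
      (mem_ball_zero_iff.2 (show ‖z‖ < 4 * R by linarith))
    have hfactor : (4 * R + ‖z - 0‖) / (4 * R - ‖z - 0‖) ≤ 3 := by
      rw [sub_zero, div_le_iff₀ (by linarith)]
      linarith
    nlinarith
  rw [mem_closedBall_zero_iff] at hw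
  refine (Complex.borelCaratheodory (R := 2 * R) hM
    (hf.differentiableOn.mono (ball_subset_closedBall.trans (closedBall_subset_closedBall
      (by linarith)))) hre (by positivity) (mem_ball_zero_iff.2 (by linarith))).trans ?_
  have hden : 0 < 2 * R - ‖w‖ := by linarith
  gcongr
  · rw [div_le_iff₀ hden]
    gcongr
    linarith
  · rw [div_le_iff₀ hden]
    nlinarith [norm_nonneg (f 0)]

lemma apply_eq_apply_zero_of_isLittleO_id {F : Type*} [NormedAddCommGroup F] [NormedSpace ℂ F]
    [CompleteSpace F] {f : ℂ → F} (hf : Differentiable ℂ f) (ho : f =o[cobounded ℂ] id) (z : ℂ) :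
    f z = f 0 := by
  have hslope : Differentiable ℂ (dslope f 0) := by
    rw [← differentiableOn_univ] at hf ⊢
    exact (Complex.differentiableOn_dslope univ_mem).2 hf
  have hsub : (fun z ↦ f z - f 0) =o[cobounded ℂ] id :=
    ho.sub (isLittleO_const_id_cobounded (f 0))
  have hlim : Tendsto (dslope f 0) (cobounded ℂ) (𝓝 0) := by
    refine (hsub.tendsto_inv_smul_nhds_zero).congr' ?_
    filter_upwards [eventually_ne_cobounded (0 : ℂ)] with z hz
    rw [dslope_of_ne _ hz, slope_def_module, sub_zero, id]
  rw [cobounded_eq_cocompact] at hlim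
  have h := sub_smul_dslope f 0 z
  rw [hslope.apply_eq_of_tendsto_cocompact z hlim, smul_zero] at h
  exact (sub_eq_zero.1 h.symm)

end OneVariable

section NormedSpace

variable {E : Type*} [NormedAddCommGroup E] [NormedSpace ℂ E]

lemma analyticOnNhd_comp_line {f : E → ℂ} (hf : AnalyticOnNhd ℂ f univ) (z v : E) :
    AnalyticOnNhd ℂ (fun t : ℂ ↦ f (z + t • v)) univ :=
  fun t _ ↦ (hf (z + t • v) (mem_univ _)).fun_comp (f := fun t : ℂ ↦ z + t • v) (by fun_prop)

lemma exists_norm_le_of_norm_mul_cexp_le {b w : E → ℂ} {Λ : ℝ → ℝ}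
    (hb : AnalyticOnNhd ℂ b univ) (hw : AnalyticOnNhd ℂ w univ) (hb0 : b ≠ 0)
    (hΛ : MonotoneOn Λ (Ici 0)) (hΛ0 : 0 ≤ Λ 0) (hbΛ : ∀ z, ‖b z‖ ≤ exp (Λ ‖z‖))
    (hbwΛ : ∀ z, ‖b z * Complex.exp (w z)‖ ≤ exp (Λ ‖z‖)) :
    ∃ C, 0 < C ∧ ∀ z, ‖w z‖ ≤ C * (Λ (C * ‖z‖ + C) + 1) := by
  obtain ⟨x, hx⟩ : ∃ x, b x ≠ 0 := Function.ne_iff.1 hb0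
  set K := 6 * |log ‖b x‖| + 2 + 3 * ‖w x‖ with hK
  set C := 6 + 5 * ‖x‖ + K with hC
  have hK0 : 0 ≤ K := by positivity
  have hC0 : 0 < C := by positivity
  have hx0 := norm_nonneg x
  refine ⟨C, hC0, fun z ↦ ?_⟩
  have hz0 := norm_nonneg z
  have hΛC : 0 ≤ Λ (C * ‖z‖ + C) :=
    hΛ0.trans (hΛ self_mem_Ici (mem_Ici.2 (by positivity)) (by positivity))
  have hline : ∀ t ∈ closedBall (0 : ℂ) (4 * 1), Λ ‖x + t • (z - x)‖ ≤ Λ (C * ‖z‖ + C) := by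
    intro t ht
    refine hΛ (mem_Ici.2 (norm_nonneg _)) (mem_Ici.2 (by positivity)) ?_
    calc ‖x + t • (z - x)‖ ≤ ‖x‖ + ‖t‖ * (‖z‖ + ‖x‖) :=
          (norm_add_le _ _).trans (by rw [norm_smul]; gcongr; exact norm_sub_le _ _)
      _ ≤ ‖x‖ + 4 * 1 * (‖z‖ + ‖x‖) := by gcongr; exact mem_closedBall_zero_iff.1 ht
      _ ≤ C * ‖z‖ + C := by nlinarith [hC]
  have h := norm_le_of_norm_mul_cexp_le (w := 1) (L := Λ (C * ‖z‖ + C)) one_pos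
    ((analyticOnNhd_comp_line hb x (z - x)).mono (subset_univ _))
    ((analyticOnNhd_comp_line hw x (z - x)).mono (subset_univ _)) (by simpa using hx)
    (fun t ht ↦ (hbΛ _).trans (exp_le_exp.2 (hline t ht)))
    (fun t ht ↦ (hbwΛ _).trans (exp_le_exp.2 (hline t ht))) (by simp)
  simp only [one_smul, zero_smul, add_zero, add_sub_cancel] at h
  nlinarith [hC, hK, neg_abs_le (log ‖b x‖)]

lemma apply_eq_apply_zero_of_isLittleO_norm {F : Type*} [NormedAddCommGroup F] [NormedSpace ℂ F]
    [CompleteSpace F] {f : E → F} (hf : Differentiable ℂ f) (ho : f =o[cobounded E] (‖·‖))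
    (z : E) : f z = f 0 := by
  rcases eq_or_ne z 0 with rfl | hz
  · rfl
  have hcob : Tendsto (fun t : ℂ ↦ t • z) (cobounded ℂ) (cobounded E) := by
    rw [← tendsto_norm_atTop_iff_cobounded]
    simp only [norm_smul]
    exact tendsto_norm_cobounded_atTop.atTop_mul_const (norm_pos_iff.2 hz)
  have hline : (fun t : ℂ ↦ f (t • z)) =o[cobounded ℂ] id := by
    refine (ho.comp_tendsto hcob).trans_isBigO (IsBigO.of_bound ‖z‖ (.of_forall fun t ↦ ?_))
    simp [norm_smul, mul_comm]
  simpa using apply_eq_apply_zero_of_isLittleO_id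
    (hf.comp (f := fun t : ℂ ↦ t • z) (by fun_prop)) hline 1

lemma exists_eq_const_mul_of_fderiv {F G : E → ℂ} (hF : AnalyticOnNhd ℂ F univ)
    (hG : AnalyticOnNhd ℂ G univ) (hG0 : G ≠ 0)
    (hFG : ∀ z, G z • fderiv ℂ F z = F z • fderiv ℂ G z) : ∃ a : ℂ, ∀ z, F z = a * G z := by
  obtain ⟨x, hx⟩ : ∃ x, G x ≠ 0 := Function.ne_iff.1 hG0
  obtain ⟨ε, hε, hne⟩ := Metric.eventually_nhds_iff_ball.1
    ((hG x (mem_univ x)).continuousAt.eventually_ne hx)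
  have hquot : ∀ z ∈ ball x ε, HasFDerivAt (fun z ↦ F z / G z) (0 : E →L[ℂ] ℂ) z := by
    intro z hz
    have hF' := (hF z (mem_univ z)).differentiableAt.hasFDerivAt
    have hG' := (hG z (mem_univ z)).differentiableAt.hasFDerivAt
    have hGz := hne z hz
    simp only [div_eq_mul_inv]
    refine (hF'.mul ((hasDerivAt_inv hGz).comp_hasFDerivAt z hG')).congr_fderiv ?_
    ext v
    have hv : G z * fderiv ℂ F z v = F z * fderiv ℂ G z v := DFunLike.congr_fun (hFG z) v
    simp only [add_apply, smul_apply, smul_eq_mul, zero_apply, Function.comp_apply]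
    field_simp
    linear_combination hv
  obtain ⟨a, ha⟩ := isOpen_ball.exists_is_const_of_fderiv_eq_zero
    (convex_ball x ε).isPreconnected
    (fun z hz ↦ (hquot z hz).differentiableAt.differentiableWithinAt)
    (fun z hz ↦ (hquot z hz).fderiv)
  refine ⟨a, congrFun (hF.eq_of_eventuallyEq (z₀ := x) (analyticOnNhd_const.mul hG) ?_)⟩
  filter_upwards [ball_mem_nhds x hε] with z hz
  exact (div_eq_iff (hne z hz)).1 (ha z hz)

lemma analyticAt_of_analyticAt_cexp {f : E → ℂ} {z : E} (hf : ContinuousAt f z)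
    (hexp : AnalyticAt ℂ (fun y ↦ Complex.exp (f y)) z) : AnalyticAt ℂ f z := by
  have hlog : AnalyticAt ℂ (fun y ↦ Complex.log (Complex.exp (f y) / Complex.exp (f z)) + f z) z :=
    ((hexp.div analyticAt_const (Complex.exp_ne_zero _)).clog (by simp)).add analyticAt_const
  refine hlog.congr ?_
  filter_upwards [hf.eventually (ball_mem_nhds (f z) pi_pos)] with y hy
  have him : |(f y - f z).im| < π :=
    (Complex.abs_im_le_norm _).trans_lt (by rwa [← dist_eq_norm])
  rw [← Complex.exp_sub, Complex.log_exp (abs_lt.1 him).1 (abs_lt.1 him).2.le, sub_add_cancel]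

lemma exists_analyticOnNhd_eq_cexp {p : E → ℂ} (hp : AnalyticOnNhd ℂ p univ)
    (hp0 : ∀ z, p z ≠ 0) : ∃ h : E → ℂ, AnalyticOnNhd ℂ h univ ∧ ∀ z, p z = Complex.exp (h z) := by
  have : ContractibleSpace (univ : Set E) :=
    (convex_univ (𝕜 := ℝ)).contractibleSpace univ_nonempty
  have hE : IsSimplyConnected (univ : Set E) := SimplyConnectedSpace.ofContractible _
  obtain ⟨h, hh, hexp⟩ := Complex.exists_continuousOn_eqOn_exp_comp hE isOpen_univ
    hp.continuousOn (by simpa using hp0)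
  have hexp' : (fun z ↦ Complex.exp (h z)) = p := funext fun z ↦ hexp (mem_univ z)
  refine ⟨h, fun z _ ↦ analyticAt_of_analyticAt_cexp (hh.continuousAt univ_mem) ?_,
    fun z ↦ (congrFun hexp' z).symm⟩
  exact hexp' ▸ hp z (mem_univ z)

end NormedSpace

section IteratedExpBound

/-- The majorant `exp (exp (⋯ (r + 2) ^ (N + 1)))`, with `k` exponentials. Letting `N` vary makes
the family stable under products and affine substitutions in `r`; the shift by `2` keeps every
member at least `2` for `r ≥ 0`. -/
noncomputable def iteratedExpBound (k N : ℕ) (r : ℝ) : ℝ := exp^[k] ((r + 2) ^ (N + 1))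

variable {k M N : ℕ} {r s : ℝ}

lemma iteratedExpBound_succ (k N : ℕ) (r : ℝ) :
    iteratedExpBound (k + 1) N r = exp (iteratedExpBound k N r) :=
  Function.iterate_succ_apply' _ _ _

lemma pow_le_iteratedExpBound (k N : ℕ) (r : ℝ) : (r + 2) ^ (N + 1) ≤ iteratedExpBound k N r := by
  induction k with
  | zero => exact le_rfl
  | succ k ih =>
    rw [iteratedExpBound_succ]
    exact ih.trans ((le_add_of_nonneg_right zero_le_one).trans (add_one_le_exp _))

lemma add_two_le_iteratedExpBound (k N : ℕ) (hr : 0 ≤ r) : r + 2 ≤ iteratedExpBound k N r :=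
  (le_self_pow₀ (by linarith) N.succ_ne_zero).trans (pow_le_iteratedExpBound k N r)

lemma two_le_iteratedExpBound (k N : ℕ) (hr : 0 ≤ r) : 2 ≤ iteratedExpBound k N r :=
  (le_add_of_nonneg_left hr).trans (add_two_le_iteratedExpBound k N hr)

lemma iteratedExpBound_mono (k : ℕ) (hMN : M ≤ N) (hr : 0 ≤ r) (hrs : r ≤ s) :
    iteratedExpBound k M r ≤ iteratedExpBound k N s := by
  refine exp_monotone.iterate k ?_
  calc (r + 2) ^ (M + 1) ≤ (s + 2) ^ (M + 1) := by gcongr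
    _ ≤ (s + 2) ^ (N + 1) := by gcongr; linarith

lemma iteratedExpBound_le_succ (k N : ℕ) (r : ℝ) :
    iteratedExpBound k N r ≤ iteratedExpBound (k + 1) N r := by
  rw [iteratedExpBound_succ]
  exact (le_add_of_nonneg_right zero_le_one).trans (add_one_le_exp _)

lemma sq_iteratedExpBound_le (k N : ℕ) (hr : 0 ≤ r) :
    iteratedExpBound k N r ^ 2 ≤ iteratedExpBound k (2 * N + 1) r := by
  induction k with
  | zero => exact (pow_mul' (r + 2) 2 (N + 1)).symm.le
  | succ k ih =>
    rw [iteratedExpBound_succ, iteratedExpBound_succ, ← exp_nat_mul]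
    refine exp_le_exp.2 (le_trans ?_ ih)
    push_cast
    nlinarith [two_le_iteratedExpBound k N hr]

lemma iteratedExpBound_mul_le (k M N : ℕ) (hr : 0 ≤ r) :
    iteratedExpBound k M r * iteratedExpBound k N r
      ≤ iteratedExpBound k (2 * max M N + 1) r := by
  have hN := two_le_iteratedExpBound k N hr
  have hmax := two_le_iteratedExpBound k (max M N) hr
  refine le_trans ?_ (sq_iteratedExpBound_le k (max M N) hr)
  rw [sq]
  gcongr
  · exact iteratedExpBound_mono k (le_max_left M N) hr le_rfl
  · exact iteratedExpBound_mono k (le_max_right M N) hr le_rfl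

lemma iteratedExpBound_add_le (k M N : ℕ) (hr : 0 ≤ r) :
    iteratedExpBound k M r + iteratedExpBound k N r
      ≤ iteratedExpBound k (2 * max M N + 1) r :=
  (add_le_mul (two_le_iteratedExpBound k M hr) (two_le_iteratedExpBound k N hr)).trans
    (iteratedExpBound_mul_le k M N hr)

lemma exists_le_iteratedExpBound (k : ℕ) (C : ℝ) :
    ∃ N, ∀ r, 0 ≤ r → C ≤ iteratedExpBound k N r := by
  obtain ⟨N, hN⟩ := pow_unbounded_of_one_lt C one_lt_two
  refine ⟨N, fun r hr ↦ hN.le.trans (le_trans ?_ (pow_le_iteratedExpBound k N r))⟩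
  calc (2 : ℝ) ^ N ≤ (r + 2) ^ N := by gcongr; linarith
    _ ≤ (r + 2) ^ (N + 1) := by gcongr <;> linarith

lemma exists_iteratedExpBound_affine_le (k N : ℕ) {C : ℝ} (hC : 0 ≤ C) :
    ∃ N', ∀ r, 0 ≤ r → iteratedExpBound k N (C * r + C) ≤ iteratedExpBound k N' r := by
  obtain ⟨M, hM⟩ := pow_unbounded_of_one_lt (C + 2) one_lt_two
  refine ⟨(M + 1) * (N + 1), fun r hr ↦ exp_monotone.iterate k ?_⟩
  have hbase : C * r + C + 2 ≤ (r + 2) ^ (M + 1) :=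
    calc C * r + C + 2 ≤ (C + 2) * (r + 2) := by nlinarith
      _ ≤ 2 ^ M * (r + 2) := by gcongr
      _ ≤ (r + 2) ^ M * (r + 2) := by gcongr; linarith
      _ = (r + 2) ^ (M + 1) := (pow_succ _ _).symm
  calc (C * r + C + 2) ^ (N + 1) ≤ ((r + 2) ^ (M + 1)) ^ (N + 1) := by gcongr
    _ = (r + 2) ^ ((M + 1) * (N + 1)) := (pow_mul _ _ _).symm
    _ ≤ (r + 2) ^ ((M + 1) * (N + 1) + 1) := by gcongr <;> linarith

lemma exists_mul_iteratedExpBound_affine_add_one_le (k N : ℕ) {C : ℝ} (hC : 0 ≤ C) :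
    ∃ N', ∀ r, 0 ≤ r → C * (iteratedExpBound k N (C * r + C) + 1) ≤ iteratedExpBound k N' r := by
  obtain ⟨M, hM⟩ := exists_iteratedExpBound_affine_le k N hC
  obtain ⟨M', hM'⟩ := exists_le_iteratedExpBound k (2 * C)
  refine ⟨_, fun r hr ↦ le_trans ?_ (iteratedExpBound_mul_le k M' M hr)⟩
  have hM2 := two_le_iteratedExpBound k M hr
  calc C * (iteratedExpBound k N (C * r + C) + 1) ≤ C * (2 * iteratedExpBound k M r) := by
        gcongr; linarith [hM r hr]
    _ = 2 * C * iteratedExpBound k M r := by ring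
    _ ≤ iteratedExpBound k M' r * iteratedExpBound k M r := by gcongr; exact hM' r hr

end IteratedExpBound

section GrowthAlgebra

variable {E : Type*} [NormedAddCommGroup E] [NormedSpace ℂ E]

variable (E) in
/-- The filtration of the entire functions on `E` by growth: level `0` consists of the constants
and level `k + 1` of the functions majorised by `k` exponentials iterated on a polynomial
in `‖z‖`. -/
def growthAlgebra : ℕ → Subalgebra ℂ (E → ℂ)
  | 0 => ⊥
  | k + 1 =>
    { carrier := {f | AnalyticOnNhd ℂ f univ ∧ ∃ N, ∀ z, ‖f z‖ ≤ iteratedExpBound k N ‖z‖}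
      mul_mem' := by
        rintro f g ⟨hf, M, hM⟩ ⟨hg, N, hN⟩
        refine ⟨hf.mul hg, _, fun z ↦ le_trans ?_
          (iteratedExpBound_mul_le k M N (norm_nonneg z))⟩
        rw [Pi.mul_apply, norm_mul]
        exact mul_le_mul (hM z) (hN z) (norm_nonneg _) ((norm_nonneg _).trans (hM z))
      add_mem' := by
        rintro f g ⟨hf, M, hM⟩ ⟨hg, N, hN⟩
        exact ⟨hf.add hg, _, fun z ↦ (norm_add_le_of_le (hM z) (hN z)).trans
          (iteratedExpBound_add_le k M N (norm_nonneg z))⟩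
      algebraMap_mem' := fun a ↦
        (exists_le_iteratedExpBound k ‖a‖).elim fun N hN ↦
          ⟨analyticOnNhd_const, N, fun z ↦ hN _ (norm_nonneg z)⟩ }

variable {k l : ℕ} {f b w : E → ℂ}

lemma mem_growthAlgebra_zero : f ∈ growthAlgebra E 0 ↔ ∃ a : ℂ, ∀ z, f z = a := by
  simp only [growthAlgebra, Algebra.mem_bot, mem_range, funext_iff, Pi.algebraMap_apply,
    Algebra.algebraMap_self, RingHom.id_apply, eq_comm]

lemma growthAlgebra_mono : Monotone (growthAlgebra E) := by
  refine monotone_nat_of_le_succ fun k ↦ ?_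
  cases k with
  | zero => exact bot_le
  | succ k =>
    rintro f ⟨hf, N, hN⟩
    exact ⟨hf, N, fun z ↦ (hN z).trans (iteratedExpBound_le_succ k N _)⟩

lemma analyticOnNhd_of_mem_growthAlgebra (hf : f ∈ growthAlgebra E k) :
    AnalyticOnNhd ℂ f univ :=
  (growthAlgebra_mono k.le_succ hf).1

lemma differentiable_of_mem_growthAlgebra (hf : f ∈ growthAlgebra E k) : Differentiable ℂ f :=
  fun z ↦ (analyticOnNhd_of_mem_growthAlgebra hf z (mem_univ z)).differentiableAt

lemma continuousLinearMap_mem_growthAlgebra_succ (φ : E →L[ℂ] ℂ) (k : ℕ) :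
    ⇑φ ∈ growthAlgebra E (k + 1) := by
  obtain ⟨N, hN⟩ := exists_iteratedExpBound_affine_le k 0 (norm_nonneg φ)
  refine ⟨φ.analyticOnNhd univ, N, fun z ↦ le_trans ?_ (hN _ (norm_nonneg z))⟩
  calc ‖φ z‖ ≤ ‖φ‖ * ‖z‖ + ‖φ‖ + 2 := by linarith [φ.le_opNorm z, norm_nonneg φ]
    _ ≤ _ := add_two_le_iteratedExpBound k 0 (by positivity)

lemma cexp_mem_growthAlgebra_succ (hf : f ∈ growthAlgebra E k) :
    (fun z ↦ Complex.exp (f z)) ∈ growthAlgebra E (k + 1) := by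
  refine ⟨(analyticOnNhd_of_mem_growthAlgebra hf).cexp, ?_⟩
  have hre : ∀ z, ‖Complex.exp (f z)‖ ≤ exp ‖f z‖ := fun z ↦ Complex.norm_exp_le_exp_norm _
  cases k with
  | zero =>
    obtain ⟨a, ha⟩ := mem_growthAlgebra_zero.1 hf
    obtain ⟨N, hN⟩ := exists_le_iteratedExpBound 0 (exp ‖a‖)
    exact ⟨N, fun z ↦ (hre z).trans (ha z ▸ hN _ (norm_nonneg z))⟩
  | succ k =>
    obtain ⟨-, N, hN⟩ := hf
    exact ⟨N, fun z ↦ (hre z).trans (iteratedExpBound_succ k N _ ▸ exp_le_exp.2 (hN z))⟩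

lemma fderiv_apply_mem_growthAlgebra_succ (hf : f ∈ growthAlgebra E (k + 1)) (v : E) :
    (fun z ↦ fderiv ℂ f z v) ∈ growthAlgebra E (k + 1) := by
  obtain ⟨hfa, N, hN⟩ := hf
  obtain ⟨N', hN'⟩ := exists_iteratedExpBound_affine_le k N (C := 1 + ‖v‖) (by positivity)
  refine ⟨(ContinuousLinearMap.apply ℂ ℂ v).comp_analyticOnNhd hfa.fderiv, N', fun z ↦ ?_⟩
  have hline : Differentiable ℂ fun t : ℂ ↦ f (z + t • v) := fun t ↦
    (analyticOnNhd_comp_line hfa z v t (mem_univ t)).differentiableAt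
  have hderiv : deriv (fun t : ℂ ↦ f (z + t • v)) 0 = fderiv ℂ f z v :=
    (hfa z (mem_univ z)).differentiableAt.lineDeriv_eq_fderiv
  dsimp only
  rw [← hderiv, ← div_one (iteratedExpBound k N' ‖z‖)]
  refine Complex.norm_deriv_le_of_forall_mem_sphere_norm_le one_pos hline.diffContOnCl
    fun t ht ↦ (hN _).trans ((iteratedExpBound_mono k le_rfl (norm_nonneg _) ?_).trans
      (hN' _ (norm_nonneg z)))
  calc ‖z + t • v‖ ≤ ‖z‖ + ‖v‖ := by
        simpa [norm_smul, mem_sphere_zero_iff_norm.1 ht] using norm_add_le z (t • v)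
    _ ≤ (1 + ‖v‖) * ‖z‖ + (1 + ‖v‖) := by nlinarith [norm_nonneg z, norm_nonneg v]

lemma isLittleO_log_affine {a c : ℝ} (ha : 0 < a) :
    (fun r ↦ log (a * r + c)) =o[atTop] (id : ℝ → ℝ) := by
  have haff : Tendsto (fun r : ℝ ↦ a * r + c) atTop atTop :=
    tendsto_atTop_add_const_right _ _ (tendsto_id.const_mul_atTop ha)
  refine (isLittleO_log_id_atTop.comp_tendsto haff).trans_isBigO ?_
  exact ((isBigO_refl _ _).const_mul_left a).add (isLittleO_const_id_atTop c).isBigO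

lemma mem_growthAlgebra_zero_of_norm_le_log {C D : ℝ} (hC : 0 < C) (hw : AnalyticOnNhd ℂ w univ)
    (hlog : ∀ z, ‖w z‖ ≤ C * (D * log (C * ‖z‖ + C + 2) + 1)) : w ∈ growthAlgebra E 0 := by
  have ho : (fun r ↦ C * (D * log (C * r + C + 2) + 1)) =o[atTop] (id : ℝ → ℝ) := by
    simp only [add_assoc]
    exact (((isLittleO_log_affine hC).const_mul_left D).add
      (isLittleO_const_id_atTop 1)).const_mul_left C
  refine mem_growthAlgebra_zero.2 ⟨w 0, apply_eq_apply_zero_of_isLittleO_norm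
    (fun z ↦ (hw z (mem_univ z)).differentiableAt) ?_⟩
  refine IsBigO.trans_isLittleO (.of_bound 1 (.of_forall fun z ↦ ?_))
    (ho.comp_tendsto tendsto_norm_cobounded_atTop)
  rw [one_mul]
  exact (hlog z).trans (le_abs_self _)

lemma mem_growthAlgebra_of_mul_cexp_mem (hb : b ∈ growthAlgebra E (k + 1))
    (hw : AnalyticOnNhd ℂ w univ) (hb0 : b ≠ 0)
    (hbw : (fun z ↦ b z * Complex.exp (w z)) ∈ growthAlgebra E (k + 1)) :
    w ∈ growthAlgebra E k := by
  obtain ⟨hba, M, hM⟩ := hb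
  obtain ⟨-, M', hM'⟩ := hbw
  set N := max M M'
  have hN z : ‖b z‖ ≤ iteratedExpBound k N ‖z‖ :=
    (hM z).trans (iteratedExpBound_mono k (le_max_left M M') (norm_nonneg z) le_rfl)
  have hN' z : ‖b z * Complex.exp (w z)‖ ≤ iteratedExpBound k N ‖z‖ :=
    (hM' z).trans (iteratedExpBound_mono k (le_max_right M M') (norm_nonneg z) le_rfl)
  cases k with
  | zero =>
    have hexp : ∀ z : E, iteratedExpBound 0 N ‖z‖ = exp ((N + 1 : ℕ) * log (‖z‖ + 2)) :=
      fun z ↦ by rw [exp_nat_mul, exp_log (by positivity)]; rfl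
    simp only [hexp] at hN hN'
    have hmono : MonotoneOn (fun r ↦ (N + 1 : ℕ) * log (r + 2)) (Ici 0) := by
      intro r hr s _ hrs
      have : 0 ≤ r := hr
      dsimp only
      gcongr
    obtain ⟨C, hC, hwC⟩ := exists_norm_le_of_norm_mul_cexp_le hba hw hb0 hmono
      (mul_nonneg (Nat.cast_nonneg _) (log_nonneg (by norm_num))) hN hN'
    exact mem_growthAlgebra_zero_of_norm_le_log hC hw hwC
  | succ k =>
    simp only [iteratedExpBound_succ] at hN hN'
    obtain ⟨C, hC, hwC⟩ := exists_norm_le_of_norm_mul_cexp_le hba hw hb0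
      (fun r hr s _ hrs ↦ iteratedExpBound_mono k le_rfl hr hrs)
      (zero_le_two.trans (two_le_iteratedExpBound k N le_rfl)) hN hN'
    obtain ⟨N', hN'⟩ := exists_mul_iteratedExpBound_affine_add_one_le k N hC.le
    exact ⟨hw, N', fun z ↦ (hwC z).trans (hN' _ (norm_nonneg z))⟩

lemma exists_mem_growthAlgebra_eq_cexp {p : E → ℂ} (hp : p ∈ growthAlgebra E (k + 1))
    (hp0 : ∀ z, p z ≠ 0) : ∃ h ∈ growthAlgebra E k, ∀ z, p z = Complex.exp (h z) := by
  obtain ⟨h, hh, hexp⟩ := exists_analyticOnNhd_eq_cexp hp.1 hp0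
  refine ⟨h, mem_growthAlgebra_of_mul_cexp_mem (b := 1) (one_mem _) hh one_ne_zero ?_, hexp⟩
  convert hp using 2 with z
  rw [hexp, Pi.one_apply, one_mul]

end GrowthAlgebra

section Borel

variable {E : Type*} [NormedAddCommGroup E] [NormedSpace ℂ E] {k l : ℕ}

/-- The directional derivative `∂_v c + c ∂_v g`, conjugate to `∂_v` under multiplication by
`exp g`: it is the coefficient of `exp g` in `∂_v (c exp g)`. -/
noncomputable def twistedDeriv (c g : E → ℂ) (v z : E) : ℂ :=
  fderiv ℂ c z v + c z * fderiv ℂ g z v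

lemma fderiv_mul_cexp_apply {c g : E → ℂ} {z : E} (hc : DifferentiableAt ℂ c z)
    (hg : DifferentiableAt ℂ g z) (v : E) :
    fderiv ℂ (fun z ↦ c z * Complex.exp (g z)) z v
      = twistedDeriv c g v z * Complex.exp (g z) := by
  rw [fderiv_fun_mul hc hg.cexp, hg.hasFDerivAt.cexp.fderiv]
  simp only [add_apply, smul_apply, smul_eq_mul, twistedDeriv]
  ring

lemma twistedDeriv_mem_growthAlgebra_succ {c g : E → ℂ} (hc : c ∈ growthAlgebra E (k + 1))
    (hg : g ∈ growthAlgebra E (k + 1)) (v : E) :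
    twistedDeriv c g v ∈ growthAlgebra E (k + 1) :=
  add_mem (fderiv_apply_mem_growthAlgebra_succ hc v)
    (mul_mem hc (fderiv_apply_mem_growthAlgebra_succ hg v))

lemma sub_mem_growthAlgebra_of_twistedDeriv {c g c₀ g₀ : E → ℂ}
    (hc : c ∈ growthAlgebra E (k + 1)) (hg : g ∈ growthAlgebra E l) (hc0 : c ≠ 0)
    (hc₀ : c₀ ∈ growthAlgebra E (k + 1)) (hg₀ : g₀ ∈ growthAlgebra E l) (hc₀0 : c₀ ≠ 0)
    (htw : ∀ v z, c₀ z * twistedDeriv c g v z = c z * twistedDeriv c₀ g₀ v z) :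
    g - g₀ ∈ growthAlgebra E k := by
  have hga := analyticOnNhd_of_mem_growthAlgebra hg
  have hg₀a := analyticOnNhd_of_mem_growthAlgebra hg₀
  obtain ⟨a, ha⟩ : ∃ a : ℂ, ∀ z,
      c z * Complex.exp (g z) = a * (c₀ z * Complex.exp (g₀ z)) := by
    refine exists_eq_const_mul_of_fderiv ((analyticOnNhd_of_mem_growthAlgebra hc).mul hga.cexp)
      ((analyticOnNhd_of_mem_growthAlgebra hc₀).mul hg₀a.cexp) ?_ fun z ↦ ?_
    · obtain ⟨x, hx⟩ := Function.ne_iff.1 hc₀0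
      exact Function.ne_iff.2 ⟨x, mul_ne_zero hx (Complex.exp_ne_zero _)⟩
    · ext v
      simp only [smul_apply, smul_eq_mul,
        fderiv_mul_cexp_apply (differentiable_of_mem_growthAlgebra hc z)
          (differentiable_of_mem_growthAlgebra hg z),
        fderiv_mul_cexp_apply (differentiable_of_mem_growthAlgebra hc₀ z)
          (differentiable_of_mem_growthAlgebra hg₀ z)]
      linear_combination Complex.exp (g z) * Complex.exp (g₀ z) * htw v z
  refine mem_growthAlgebra_of_mul_cexp_mem hc (hga.sub hg₀a) hc0 ?_
  convert Subalgebra.smul_mem _ hc₀ a using 2 with z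
  rw [Pi.sub_apply, Complex.exp_sub, ← mul_div_assoc, ha, Pi.smul_apply, smul_eq_mul]
  field_simp [Complex.exp_ne_zero]

variable {ι : Type*} {s : Finset ι} {c g : ι → E → ℂ}

lemma sum_twistedDeriv_mul_cexp_eq_zero (hc : ∀ i ∈ s, Differentiable ℂ (c i))
    (hg : ∀ i ∈ s, Differentiable ℂ (g i)) (hsum : ∀ z, ∑ i ∈ s, c i z * Complex.exp (g i z) = 0)
    (v z : E) : ∑ i ∈ s, twistedDeriv (c i) (g i) v z * Complex.exp (g i z) = 0 := by
  have hdiff : ∀ i ∈ s, DifferentiableAt ℂ (fun z ↦ c i z * Complex.exp (g i z)) z :=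
    fun i hi ↦ (hc i hi z).mul (hg i hi z).cexp
  calc ∑ i ∈ s, twistedDeriv (c i) (g i) v z * Complex.exp (g i z)
      = fderiv ℂ (fun z ↦ ∑ i ∈ s, c i z * Complex.exp (g i z)) z v := by
        rw [fderiv_fun_sum hdiff, sum_apply]
        exact Finset.sum_congr rfl fun i hi ↦
          (fderiv_mul_cexp_apply (hc i hi z) (hg i hi z) v).symm
    _ = 0 := by rw [funext hsum, fderiv_fun_const, Pi.zero_apply, zero_apply]

lemma sum_sub_twistedDeriv_mul_cexp_eq_zero [DecidableEq ι] {j : ι} (hj : j ∉ s)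
    (hc : ∀ i ∈ insert j s, Differentiable ℂ (c i))
    (hg : ∀ i ∈ insert j s, Differentiable ℂ (g i))
    (hsum : ∀ z, ∑ i ∈ insert j s, c i z * Complex.exp (g i z) = 0) (v z : E) :
    ∑ i ∈ s, (c j * twistedDeriv (c i) (g i) v - c i * twistedDeriv (c j) (g j) v) z
      * Complex.exp (g i z) = 0 := by
  have hderiv := sum_twistedDeriv_mul_cexp_eq_zero hc hg hsum v z
  have hz := hsum z
  rw [Finset.sum_insert hj] at hderiv hz
  simp only [Pi.sub_apply, Pi.mul_apply, sub_mul, Finset.sum_sub_distrib, mul_assoc,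
    mul_left_comm _ (twistedDeriv (c j) (g j) v z), ← Finset.mul_sum]
  linear_combination c j z * hderiv - twistedDeriv (c j) (g j) v z * hz

theorem eq_zero_of_sum_mul_cexp_eq_zero (hc : ∀ i ∈ s, c i ∈ growthAlgebra E (k + 1))
    (hg : ∀ i ∈ s, g i ∈ growthAlgebra E (k + 1))
    (hne : (s : Set ι).Pairwise fun i j ↦ g i - g j ∉ growthAlgebra E k)
    (hsum : ∀ z, ∑ i ∈ s, c i z * Complex.exp (g i z) = 0) : ∀ i ∈ s, c i = 0 := by
  classical
  induction s using Finset.induction_on generalizing c with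
  | empty => simp
  | insert j s hj ih =>
    -- Dividing the relation by its `j`-th term and differentiating yields a shorter relation.
    have hshort := sum_sub_twistedDeriv_mul_cexp_eq_zero hj
      (fun i hi ↦ differentiable_of_mem_growthAlgebra (hc i hi))
      (fun i hi ↦ differentiable_of_mem_growthAlgebra (hg i hi)) hsum
    simp only [Finset.forall_mem_insert] at hc hg ⊢
    rw [Finset.coe_insert, pairwise_insert] at hne
    simp only [Finset.sum_insert hj] at hsum
    have hcj : c j = 0 := by
      by_contra hcj
      have htw v : ∀ i ∈ s, c j * twistedDeriv (c i) (g i) v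
          - c i * twistedDeriv (c j) (g j) v = 0 :=
        ih (fun i hi ↦ sub_mem
          (mul_mem hc.1 (twistedDeriv_mem_growthAlgebra_succ (hc.2 i hi) (hg.2 i hi) v))
          (mul_mem (hc.2 i hi) (twistedDeriv_mem_growthAlgebra_succ hc.1 hg.1 v)))
          hg.2 hne.1 (hshort v)
      have hcs : ∀ i ∈ s, c i = 0 := by
        intro i hi
        by_contra hci
        refine (hne.2 i (Finset.mem_coe.2 hi) (ne_of_mem_of_not_mem hi hj).symm).2 ?_
        exact sub_mem_growthAlgebra_of_twistedDeriv (hc.2 i hi) (hg.2 i hi) hci hc.1 hg.1 hcj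
          fun v z ↦ sub_eq_zero.1 (congrFun (htw v i hi) z)
      refine hcj (funext fun z ↦ ?_)
      have hz := hsum z
      rw [Finset.sum_eq_zero fun i hi ↦ by rw [hcs i hi, Pi.zero_apply, zero_mul], add_zero] at hz
      exact (mul_eq_zero.1 hz).resolve_right (Complex.exp_ne_zero _)
    exact ⟨hcj, ih hc.2 hg.2 hne.1 fun z ↦ by simpa [hcj] using hsum z⟩

open Classical in
theorem sum_filter_mul_cexp_eq_zero (hc : ∀ i ∈ s, c i ∈ growthAlgebra E (k + 1))
    (hg : ∀ i ∈ s, g i ∈ growthAlgebra E (k + 1))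
    (hsum : ∀ z, ∑ i ∈ s, c i z * Complex.exp (g i z) = 0) (h : E → ℂ) (z : E) :
    ∑ i ∈ s with g i - h ∈ growthAlgebra E k, c i z * Complex.exp (g i z) = 0 := by
  let mk := (Subalgebra.toSubmodule (growthAlgebra E k)).mkQ
  have hmk : ∀ f₁ f₂, mk f₁ = mk f₂ ↔ f₁ - f₂ ∈ growthAlgebra E k := fun _ _ ↦
    Submodule.Quotient.eq _
  have hout : ∀ q, mk q.out = q := Quotient.out_eq'
  let coeff q : E → ℂ := ∑ i ∈ s with mk (g i) = q, c i * fun z ↦ Complex.exp ((g i - q.out) z)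
  have hcoeff_mul q z : coeff q z * Complex.exp (q.out z)
      = ∑ i ∈ s with mk (g i) = q, c i z * Complex.exp (g i z) := by
    simp only [coeff, Finset.sum_apply, Pi.mul_apply, Finset.sum_mul, mul_assoc,
      ← Complex.exp_add, Pi.sub_apply, sub_add_cancel]
  have hcoeff : ∀ q ∈ s.image (mk ∘ g), coeff q = 0 := by
    refine eq_zero_of_sum_mul_cexp_eq_zero (k := k) (g := Quotient.out) ?_ ?_ ?_ fun z ↦ ?_
    · refine fun q _ ↦ sum_mem fun i hi ↦ ?_
      obtain ⟨his, hiq⟩ := Finset.mem_filter.1 hi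
      refine mul_mem (hc i his) (cexp_mem_growthAlgebra_succ ((hmk _ _).1 ?_))
      rw [hout, hiq]
    · refine Finset.forall_mem_image.2 fun i hi ↦ ?_
      have hi' : g i - (mk (g i)).out ∈ growthAlgebra E k := (hmk _ _).1 (hout _).symm
      simpa using sub_mem (hg i hi) (growthAlgebra_mono k.le_succ hi')
    · intro q _ q' _ hqq'
      rwa [← hmk, hout, hout]
    · simp only [hcoeff_mul]
      rw [← hsum z]
      exact Finset.sum_fiberwise_of_maps_to (fun i hi ↦ Finset.mem_image_of_mem (mk ∘ g) hi) _
  simp only [← hmk]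
  by_cases hh : mk h ∈ s.image (mk ∘ g)
  · rw [← hcoeff_mul, hcoeff _ hh, Pi.zero_apply, zero_mul]
  · exact Finset.sum_eq_zero fun i hi ↦
      (hh (Finset.mem_image.2 ⟨i, Finset.mem_filter.1 hi⟩)).elim

open Classical in
theorem mul_cexp_eq_sum_filter {a h : E → ℂ} (ha : a ∈ growthAlgebra E (k + 1))
    (hh : h ∈ growthAlgebra E (k + 1)) (hc : ∀ i ∈ s, c i ∈ growthAlgebra E (k + 1))
    (hg : ∀ i ∈ s, g i ∈ growthAlgebra E (k + 1))
    (hsum : ∀ z, a z * Complex.exp (h z) = ∑ i ∈ s, c i z * Complex.exp (g i z)) (z : E) :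
    a z * Complex.exp (h z)
      = ∑ i ∈ s with g i - h ∈ growthAlgebra E k, c i z * Complex.exp (g i z) := by
  have hzero := sum_filter_mul_cexp_eq_zero (k := k) (s := s.insertNone)
    (c := fun o ↦ o.elim (-a) c) (g := fun o ↦ o.elim h g)
    (Finset.forall_mem_insertNone.2 ⟨neg_mem ha, hc⟩)
    (Finset.forall_mem_insertNone.2 ⟨hh, hg⟩) ?_ h z
  · rw [Finset.sum_filter, Finset.sum_insertNone] at hzero
    simp only [Option.elim, sub_self, zero_mem, if_true, Pi.neg_apply, neg_mul,
      neg_add_eq_zero] at hzero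
    rw [Finset.sum_filter]
    exact hzero
  · intro z
    simp [Finset.sum_insertNone, hsum]

end Borel

section ExpAlgebra

/-- The filtration, by nesting depth of exponentials, of the algebra of exponential polynomials in
the functions `X`. The functions of `X` themselves have depth `1`, so that depth `0` means
constant, as for `growthAlgebra`. -/
def expAlgebra {α : Type*} (X : Set (α → ℂ)) : ℕ → Subalgebra ℂ (α → ℂ)
  | 0 => ⊥
  | k + 1 => Algebra.adjoin ℂ (X ∪ (fun g z ↦ Complex.exp (g z)) '' (expAlgebra X k : Set (α → ℂ)))

variable {α : Type*} {X : Set (α → ℂ)} {k : ℕ} {f : α → ℂ}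

lemma adjoin_le_expAlgebra_succ : Algebra.adjoin ℂ X ≤ expAlgebra X (k + 1) :=
  Algebra.adjoin_mono subset_union_left

lemma cexp_mem_expAlgebra_succ (hf : f ∈ expAlgebra X k) :
    (fun z ↦ Complex.exp (f z)) ∈ expAlgebra X (k + 1) :=
  Algebra.subset_adjoin (Or.inr (mem_image_of_mem _ hf))

lemma expAlgebra_mono : Monotone (expAlgebra X) := by
  refine monotone_nat_of_le_succ fun k ↦ ?_
  induction k with
  | zero => exact bot_le
  | succ k ih => exact Algebra.adjoin_mono (union_subset_union_right _ (image_mono ih))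

lemma exists_eq_cexp_of_mem_closure
    (hf : f ∈ Submonoid.closure ((fun g z ↦ Complex.exp (g z)) '' (expAlgebra X k : Set (α → ℂ)))) :
    ∃ g ∈ expAlgebra X k, f = fun z ↦ Complex.exp (g z) := by
  induction hf using Submonoid.closure_induction with
  | mem f hf => exact hf.imp fun g hg ↦ ⟨hg.1, hg.2.symm⟩
  | one => exact ⟨0, zero_mem _, funext fun z ↦ by simp⟩
  | mul f₁ f₂ _ _ ih₁ ih₂ =>
    obtain ⟨g₁, hg₁, rfl⟩ := ih₁
    obtain ⟨g₂, hg₂, rfl⟩ := ih₂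
    exact ⟨g₁ + g₂, add_mem hg₁ hg₂, funext fun z ↦ (Complex.exp_add _ _).symm⟩

lemma exists_eq_sum_mul_cexp (hf : f ∈ expAlgebra X (k + 1)) :
    ∃ (m : ℕ) (a g : Fin m → α → ℂ), (∀ i, a i ∈ Algebra.adjoin ℂ X) ∧
      (∀ i, g i ∈ expAlgebra X k) ∧ ∀ z, f z = ∑ i, a i z * Complex.exp (g i z) := by
  rw [expAlgebra, Algebra.adjoin_union_eq_adjoin_adjoin, Subalgebra.mem_restrictScalars,
    ← Subalgebra.mem_toSubmodule, Algebra.adjoin_eq_span, Submodule.mem_span_set'] at hf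
  obtain ⟨m, a, e, rfl⟩ := hf
  choose g hg heg using fun i ↦ exists_eq_cexp_of_mem_closure (e i).2
  refine ⟨m, fun i ↦ a i, g, fun i ↦ (a i).2, hg, fun z ↦ ?_⟩
  simp [heg, Subalgebra.smul_def]

lemma sum_mul_cexp_mem_expAlgebra_succ {ι : Type*} {s : Finset ι} {c g : ι → α → ℂ}
    (hc : ∀ i ∈ s, c i ∈ Algebra.adjoin ℂ X) (hg : ∀ i ∈ s, g i ∈ expAlgebra X k) :
    (fun z ↦ ∑ i ∈ s, c i z * Complex.exp (g i z)) ∈ expAlgebra X (k + 1) := by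
  rw [← Finset.sum_fn]
  exact sum_mem fun i hi ↦
    mul_mem (adjoin_le_expAlgebra_succ (hc i hi)) (cexp_mem_expAlgebra_succ (hg i hi))

variable {E : Type*} [NormedAddCommGroup E] [NormedSpace ℂ E] {X : Set (E → ℂ)}
  {p a h : E → ℂ}

lemma expAlgebra_le_growthAlgebra (hX : X ⊆ growthAlgebra E 1) (k : ℕ) :
    expAlgebra X k ≤ growthAlgebra E k := by
  induction k with
  | zero => exact le_rfl
  | succ k ih =>
    refine Algebra.adjoin_le (union_subset
      (hX.trans (growthAlgebra_mono (Nat.le_add_left 1 k))) ?_)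
    rintro _ ⟨g, hg, rfl⟩
    exact cexp_mem_growthAlgebra_succ (ih hg)

theorem exists_mul_cexp_eq_sum (hX : X ⊆ growthAlgebra E 1) (ha : a ∈ growthAlgebra E (k + 1))
    (hh : h ∈ growthAlgebra E (k + 1))
    (hah : (fun z ↦ a z * Complex.exp (h z)) ∈ expAlgebra X (k + 2)) :
    ∃ (m : ℕ) (s : Finset (Fin m)) (c g : Fin m → E → ℂ), (∀ i, c i ∈ Algebra.adjoin ℂ X) ∧
      (∀ i, g i ∈ expAlgebra X (k + 1)) ∧ (∀ i ∈ s, g i - h ∈ growthAlgebra E k) ∧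
      ∀ z, a z * Complex.exp (h z) = ∑ i ∈ s, c i z * Complex.exp (g i z) := by
  classical
  obtain ⟨m, c, g, hc, hg, hsum⟩ := exists_eq_sum_mul_cexp hah
  refine ⟨m, Finset.univ.filter fun i ↦ g i - h ∈ growthAlgebra E k, c, g, hc, hg,
    fun i hi ↦ (Finset.mem_filter.1 hi).2, ?_⟩
  have hle := expAlgebra_le_growthAlgebra hX (k + 1)
  exact mul_cexp_eq_sum_filter ha hh (fun i _ ↦ hle (adjoin_le_expAlgebra_succ (hc i)))
    (fun i _ ↦ hle (hg i)) hsum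

theorem mem_expAlgebra_of_mem_growthAlgebra (hX : X ⊆ growthAlgebra E 1)
    (hp : p ∈ expAlgebra X (k + 1)) (hpk : p ∈ growthAlgebra E k) : p ∈ expAlgebra X k := by
  induction k generalizing p with
  | zero => exact hpk
  | succ k ih =>
    obtain ⟨m, s, c, g, hc, hg, hgk, hsum⟩ :=
      exists_mul_cexp_eq_sum hX hpk (zero_mem _) (by simpa using hp)
    have hps : p = fun z ↦ ∑ i ∈ s, c i z * Complex.exp (g i z) :=
      funext fun z ↦ by simpa using hsum z
    rw [hps]
    exact sum_mul_cexp_mem_expAlgebra_succ (fun i _ ↦ hc i)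
      fun i hi ↦ ih (hg i) (by simpa using hgk i hi)

theorem exists_cexp_sub_mem_expAlgebra (hX : X ⊆ growthAlgebra E 1)
    (hh : h ∈ growthAlgebra E (k + 1))
    (hexp : (fun z ↦ Complex.exp (h z)) ∈ expAlgebra X (k + 2)) :
    ∃ g ∈ expAlgebra X (k + 1), (fun z ↦ Complex.exp ((h - g) z)) ∈ expAlgebra X (k + 1) := by
  obtain ⟨m, s, c, g, hc, hg, hgk, hsum⟩ :=
    exists_mul_cexp_eq_sum hX (one_mem _) hh (by simpa using hexp)
  simp only [Pi.one_apply, one_mul] at hsum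
  obtain ⟨j, hj⟩ : s.Nonempty := by
    rw [Finset.nonempty_iff_ne_empty]
    rintro rfl
    exact Complex.exp_ne_zero _ (hsum 0)
  refine ⟨g j, hg j, ?_⟩
  have hquot : (fun z ↦ Complex.exp ((h - g j) z))
      = fun z ↦ ∑ i ∈ s, c i z * Complex.exp ((g i - g j) z) := by
    funext z
    simp only [Pi.sub_apply, Complex.exp_sub, hsum, Finset.sum_div, mul_div_assoc]
  rw [hquot]
  refine sum_mul_cexp_mem_expAlgebra_succ (fun i _ ↦ hc i) fun i hi ↦ ?_
  refine mem_expAlgebra_of_mem_growthAlgebra hX (sub_mem (hg i) (hg j)) ?_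
  simpa using sub_mem (hgk i hi) (hgk j hj)

end ExpAlgebra

section Coordinates

variable {n k : ℕ} {p : (Fin n → ℂ) → ℂ}

lemma range_eval_subset_growthAlgebra :
    range (Function.eval : Fin n → (Fin n → ℂ) → ℂ) ⊆ growthAlgebra (Fin n → ℂ) 1 :=
  range_subset_iff.2 fun i ↦
    continuousLinearMap_mem_growthAlgebra_succ (.proj (φ := fun _ ↦ ℂ) i) 0

lemma exists_mem_expAlgebra_of_isExpPoly (hp : IsExpPoly n p) :
    ∃ k, p ∈ expAlgebra (range Function.eval) (k + 1) := by
  induction hp with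
  | const c => exact ⟨0, (expAlgebra _ _).algebraMap_mem c⟩
  | coord i => exact ⟨0, Algebra.subset_adjoin (Or.inl (mem_range_self i))⟩
  | add _ _ ihf ihg =>
    obtain ⟨k, hk⟩ := ihf
    obtain ⟨l, hl⟩ := ihg
    exact ⟨max k l, add_mem (expAlgebra_mono (by lia) hk) (expAlgebra_mono (by lia) hl)⟩
  | neg _ ih => exact ih.imp fun k ↦ neg_mem
  | mul _ _ ihf ihg =>
    obtain ⟨k, hk⟩ := ihf
    obtain ⟨l, hl⟩ := ihg
    exact ⟨max k l, mul_mem (expAlgebra_mono (by lia) hk) (expAlgebra_mono (by lia) hl)⟩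
  | exp _ ih => exact ih.elim fun k hk ↦ ⟨k + 1, cexp_mem_expAlgebra_succ hk⟩

lemma isExpPoly_of_mem_expAlgebra (hp : p ∈ expAlgebra (range Function.eval) k) :
    IsExpPoly n p := by
  induction k generalizing p with
  | zero =>
    obtain ⟨c, rfl⟩ := Algebra.mem_bot.1 hp
    exact .const c
  | succ k ih =>
    induction hp using Algebra.adjoin_induction with
    | mem f hf =>
      obtain ⟨i, rfl⟩ | ⟨g, hg, rfl⟩ := hf
      · exact .coord i
      · exact .exp (ih hg)
    | algebraMap c => exact .const c
    | add f g _ _ ihf ihg => exact ihf.add ihg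
    | mul f g _ _ ihf ihg => exact ihf.mul ihg

end Coordinates

end HensonRubel

open HensonRubel

theorem henson_rubel_general {E : Type*} [NormedAddCommGroup E] [NormedSpace ℂ E]
    {X : Set (E → ℂ)} {k : ℕ} {p : E → ℂ} (hX : X ⊆ growthAlgebra E 1)
    (hp : p ∈ expAlgebra X (k + 1)) (hp0 : ∀ z, p z ≠ 0) :
    ∃ g ∈ expAlgebra X k, ∀ z, p z = Complex.exp (g z) := by
  induction k generalizing p with
  | zero => exact exists_mem_growthAlgebra_eq_cexp (expAlgebra_le_growthAlgebra hX 1 hp) hp0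
  | succ k ih =>
    obtain ⟨h, hh, hph⟩ :=
      exists_mem_growthAlgebra_eq_cexp (expAlgebra_le_growthAlgebra hX _ hp) hp0
    obtain ⟨g₁, hg₁, hquot⟩ := exists_cexp_sub_mem_expAlgebra hX hh (funext hph ▸ hp)
    obtain ⟨g₂, hg₂, hexp⟩ := ih hquot fun z ↦ Complex.exp_ne_zero _
    refine ⟨g₁ + g₂, add_mem hg₁ (expAlgebra_mono k.le_succ hg₂), fun z ↦ ?_⟩
    rw [hph, Pi.add_apply, Complex.exp_add, ← hexp, ← Complex.exp_add, Pi.sub_apply,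
      add_sub_cancel]

theorem henson_rubel (n : ℕ) (p : (Fin n → ℂ) → ℂ) (hp : IsExpPoly n p)
    (hnz : ∀ z : Fin n → ℂ, p z ≠ 0) :
    ∃ g : (Fin n → ℂ) → ℂ, IsExpPoly n g ∧ ∀ z : Fin n → ℂ, p z = Complex.exp (g z) := by
  obtain ⟨k, hk⟩ := exists_mem_expAlgebra_of_isExpPoly hp
  obtain ⟨g, hg, hpg⟩ := henson_rubel_general range_eval_subset_growthAlgebra hk hnz
  exact ⟨g, isExpPoly_of_mem_expAlgebra hg, hpg⟩
end

section
/- Let K be an algebraically closed field of characteristic 0, let α ≥ 1, let m_1, …, m_α be natural numbers, not all zero, whose greatest common divisor is 1, and let b ∈ K with b ≠ 0. Then the polynomial y_1^{m_1} ⋯ y_α^{m_α} − b is irreducible in the multivariate polynomial ring K[y_1, …, y_α]. -/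
open MvPolynomial

/-!
Write `x ^ m` for the monomial `∏ i, X i ^ m i`. For `i ≠ j` give `X i` the weight `m j`, `X j`
the weight `-m i`, and every other variable the weight `0`. Then `x ^ m - b` is homogeneous of
weight `0`, and so is each of its divisors `f`, since over a domain the highest and lowest weights
add up under multiplication and `f` has a nonzero constant term. Letting `i` and `j` vary, the
exponent `d` of any monomial of `f` is proportional to `m`; as the `m i` are coprime, `d` is a
multiple of `m`. So the degree of `f` is a multiple of the degree of `x ^ m - b`, and in any
factorization one of the two factors is a constant.
-/

section WeightedHomogeneous

variable {σ R M : Type*} [CommSemiring R] [AddCommMonoid M] {w : σ → M} {f g p : MvPolynomial σ R}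

theorem weightedHomogeneousComponent_mul_of_uniqueAdd [DecidableEq M] {a b : M}
    (hab : UniqueAdd (f.support.image (Finsupp.weight w)) (g.support.image (Finsupp.weight w))
      a b) :
    weightedHomogeneousComponent w (a + b) (f * g) =
      weightedHomogeneousComponent w a f * weightedHomogeneousComponent w b g := by
  classical
  ext d
  rw [coeff_weightedHomogeneousComponent, coeff_mul, coeff_mul, ← boole_mul, Finset.mul_sum]
  refine Finset.sum_congr rfl fun ⟨x, y⟩ hxy ↦ ?_
  rw [boole_mul, coeff_weightedHomogeneousComponent, coeff_weightedHomogeneousComponent,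
    ite_zero_mul_ite_zero, ← Finset.HasAntidiagonal.mem_antidiagonal.mp hxy, map_add]
  by_cases hxy₀ : coeff x f * coeff y g = 0
  · simp only [hxy₀, ite_self]
  · have hx := Finset.mem_image_of_mem (Finsupp.weight w)
      (mem_support_iff.mpr (left_ne_zero_of_mul hxy₀))
    have hy := Finset.mem_image_of_mem (Finsupp.weight w)
      (mem_support_iff.mpr (right_ne_zero_of_mul hxy₀))
    exact if_congr ⟨hab hx hy, fun h ↦ congrArg₂ (· + ·) h.1 h.2⟩ rfl rfl

theorem weightedHomogeneousComponent_ne_zero_iff [DecidableEq M] {a : M} :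
    weightedHomogeneousComponent w a f ≠ 0 ↔ a ∈ f.support.image (Finsupp.weight w) := by
  rw [← support_nonempty, support_weightedHomogeneousComponent, Finset.filter_nonempty_iff]
  simp

theorem add_eq_of_isWeightedHomogeneous_mul_of_uniqueAdd [NoZeroDivisors R] [DecidableEq M]
    {a b n : M} (hfg : IsWeightedHomogeneous w (f * g) n)
    (ha : a ∈ f.support.image (Finsupp.weight w)) (hb : b ∈ g.support.image (Finsupp.weight w))
    (hab : UniqueAdd (f.support.image (Finsupp.weight w)) (g.support.image (Finsupp.weight w))
      a b) :
    a + b = n := by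
  by_contra hne
  refine mul_ne_zero (weightedHomogeneousComponent_ne_zero_iff.mpr ha)
    (weightedHomogeneousComponent_ne_zero_iff.mpr hb) ?_
  rw [← weightedHomogeneousComponent_mul_of_uniqueAdd hab]
  exact hfg.weightedHomogeneousComponent_ne _ hne

theorem exists_isWeightedHomogeneous_of_dvd [NoZeroDivisors R] [TwoUniqueSums M] {n : M}
    (hp : IsWeightedHomogeneous w p n) (hp₀ : p ≠ 0) (hfp : f ∣ p) :
    ∃ a, IsWeightedHomogeneous w f a := by
  classical
  obtain ⟨g, rfl⟩ := hfp
  set A := f.support.image (Finsupp.weight w)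
  set B := g.support.image (Finsupp.weight w)
  have hA₀ : A.Nonempty := (support_nonempty.mpr (left_ne_zero_of_mul hp₀)).image _
  have hB₀ : B.Nonempty := (support_nonempty.mpr (right_ne_zero_of_mul hp₀)).image _
  -- Otherwise two different weights would be attained by exactly one pair in `A × B` each, and the
  -- corresponding components of `f * g` would both be nonzero.
  have hAB : A.card * B.card ≤ 1 := by
    by_contra! hlt
    obtain ⟨⟨a, b⟩, hab, ⟨a', b'⟩, hab', hne, huniq, huniq'⟩ :=
      TwoUniqueSums.uniqueAdd_of_one_lt_card hlt
    rw [Finset.mem_product] at hab hab'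
    have hsum : a + b = n :=
      add_eq_of_isWeightedHomogeneous_mul_of_uniqueAdd hp hab.1 hab.2 huniq
    have hsum' : a' + b' = n :=
      add_eq_of_isWeightedHomogeneous_mul_of_uniqueAdd hp hab'.1 hab'.2 huniq'
    exact hne (Prod.ext_iff.mpr (huniq' hab.1 hab.2 (hsum.trans hsum'.symm)))
  have hA₁ : A.card ≤ 1 := (Nat.le_mul_of_pos_right _ hB₀.card_pos).trans hAB
  obtain ⟨a, ha⟩ := hA₀
  exact ⟨a, fun d hd ↦ Finset.card_le_one.mp hA₁ _
    (Finset.mem_image_of_mem _ (mem_support_iff.mpr hd)) _ ha⟩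

theorem isWeightedHomogeneous_zero_of_dvd [NoZeroDivisors R] [TwoUniqueSums M]
    (hp : IsWeightedHomogeneous w p 0) (hp₀ : coeff 0 p ≠ 0) (hfp : f ∣ p) :
    IsWeightedHomogeneous w f 0 := by
  obtain ⟨a, hfa⟩ := exists_isWeightedHomogeneous_of_dvd hp (ne_zero_iff.mpr ⟨0, hp₀⟩) hfp
  have hf₀ : coeff 0 f ≠ 0 := ne_zero_of_dvd_ne_zero hp₀ (map_dvd constantCoeff hfp)
  have ha : a = 0 := by rw [← hfa hf₀, map_zero]
  rwa [ha] at hfa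

end WeightedHomogeneous

section TotalDegree

variable {σ R : Type*}

theorem dvd_totalDegree_of_forall_dvd_degree [CommSemiring R] {f : MvPolynomial σ R} {n : ℕ}
    (h : ∀ d ∈ f.support, n ∣ d.degree) : n ∣ f.totalDegree :=
  Finset.sup_induction (p := (n ∣ ·)) (dvd_zero n)
    (fun a ha b hb ↦ by rcases max_choice a b with h | h <;> simpa [h]) h

theorem isUnit_of_dvd_of_totalDegree_eq_zero [CommSemiring R] {f p : MvPolynomial σ R}
    {d : σ →₀ ℕ} (hp : IsUnit (coeff d p)) (hfp : f ∣ p) (hf : f.totalDegree = 0) : IsUnit f := by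
  rw [totalDegree_eq_zero_iff_eq_C.mp hf] at hfp ⊢
  exact (isUnit_of_dvd_unit ((C_dvd_iff_dvd_coeff _ _).mp hfp d) hp).map C

theorem irreducible_of_forall_totalDegree_dvd [CommRing R] [IsDomain R] {p : MvPolynomial σ R}
    {d : σ →₀ ℕ} (hp : IsUnit (coeff d p)) (hdeg : p.totalDegree ≠ 0)
    (hdvd : ∀ f, f ∣ p → p.totalDegree ∣ f.totalDegree) : Irreducible p := by
  refine ⟨fun hu ↦ hdeg (isUnit_iff_totalDegree_of_isReduced.mp hu).2, ?_⟩
  rintro f g rfl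
  have hfg : f * g ≠ 0 := ne_zero_iff.mpr ⟨d, hp.ne_zero⟩
  have hadd : (f * g).totalDegree = f.totalDegree + g.totalDegree :=
    totalDegree_mul_of_isDomain (left_ne_zero_of_mul hfg) (right_ne_zero_of_mul hfg)
  have hzero : f.totalDegree = 0 ∨ g.totalDegree = 0 := by
    by_contra! hne
    have hf := Nat.le_of_dvd (Nat.pos_of_ne_zero hne.1) (hdvd f (dvd_mul_right f g))
    omega
  exact hzero.imp (isUnit_of_dvd_of_totalDegree_eq_zero hp (dvd_mul_right f g))
    (isUnit_of_dvd_of_totalDegree_eq_zero hp (dvd_mul_left g f))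

theorem totalDegree_monomial_sub_C [CommRing R] [Nontrivial R] (m : σ →₀ ℕ) (b : R) :
    (monomial m 1 - C b).totalDegree = m.degree := by
  classical
  rcases eq_or_ne m 0 with rfl | hm
  · rw [monomial_zero', ← C_sub, totalDegree_C, map_zero]
  refine le_antisymm ((totalDegree_sub_C_le _ b).trans (totalDegree_monomial_le m 1)) ?_
  exact le_totalDegree (by simp [coeff_monomial, coeff_C, hm.symm])

end TotalDegree

theorem eq_gcd_mul_of_forall_mul_eq_mul {ι : Type*} {s : Finset ι} {m d : ι → ℕ} {i : ι}
    (hm : s.gcd m = 1) (hd : ∀ j ∈ s, d i * m j = d j * m i) : d i = s.gcd d * m i :=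
  calc
    d i = s.gcd fun j ↦ d i * m j := by rw [Finset.gcd_mul_left, hm, mul_one, normalize_eq]
    _ = s.gcd fun j ↦ d j * m i := Finset.gcd_congr rfl hd
    _ = s.gcd d * m i := by rw [Finset.gcd_mul_right, normalize_eq]

/-- The weights on the variables for which the monomial with exponent `d` has weight
`d i * m j - d j * m i`, the `2 × 2` minor of `d` and `m` in the columns `i` and `j`. It vanishes
for all `i` and `j` exactly when `d` and `m` are proportional. -/
def minorWeight {σ : Type*} [DecidableEq σ] (m : σ → ℕ) (i j : σ) : σ → ℤ :=
  Pi.single i (m j : ℤ) - Pi.single j (m i : ℤ)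

theorem weight_minorWeight {σ : Type*} [DecidableEq σ] (m : σ → ℕ) (i j : σ) (d : σ →₀ ℕ) :
    Finsupp.weight (minorWeight m i j) d = d i * m j - d j * m i := by
  rw [← nsmul_eq_mul, ← nsmul_eq_mul, ← Finsupp.weight_single_index i,
    ← Finsupp.weight_single_index j]
  simp only [minorWeight, Finsupp.weight_apply, Pi.sub_apply, smul_sub, Finsupp.sum_sub]

section MonomialSubC

variable {σ R : Type*} [CommRing R] {m : σ →₀ ℕ} {b : R}

theorem isWeightedHomogeneous_minorWeight_monomial_sub_C [DecidableEq σ] (i j : σ) :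
    IsWeightedHomogeneous (minorWeight m i j) (monomial m 1 - C b) 0 :=
  (isWeightedHomogeneous_monomial _ m 1 (by rw [weight_minorWeight, mul_comm, sub_self])).sub
    (isWeightedHomogeneous_C _ b)

variable [IsDomain R] {f : MvPolynomial σ R}

theorem mul_eq_mul_of_mem_support_of_dvd_monomial_sub_C (hb : b ≠ 0)
    (hf : f ∣ monomial m 1 - C b) {d : σ →₀ ℕ} (hd : d ∈ f.support) (i j : σ) :
    d i * m j = d j * m i := by
  classical
  rcases eq_or_ne m 0 with rfl | hm
  · simp
  have hcoeff₀ : coeff 0 (monomial m 1 - C b) ≠ 0 := by simpa [coeff_monomial, hm] using hb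
  have hf₀ : IsWeightedHomogeneous (minorWeight m i j) f 0 :=
    isWeightedHomogeneous_zero_of_dvd (isWeightedHomogeneous_minorWeight_monomial_sub_C i j)
      hcoeff₀ hf
  have hweight := hf₀ (mem_support_iff.mp hd)
  rw [weight_minorWeight, sub_eq_zero] at hweight
  exact_mod_cast hweight

theorem degree_dvd_totalDegree_of_dvd_monomial_sub_C {s : Finset σ} (hs : s.gcd m = 1)
    (hb : b ≠ 0) (hf : f ∣ monomial m 1 - C b) : m.degree ∣ f.totalDegree := by
  refine dvd_totalDegree_of_forall_dvd_degree fun d hd ↦ ?_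
  have hdm : d = s.gcd d • m := Finsupp.ext fun i ↦ eq_gcd_mul_of_forall_mul_eq_mul hs fun j _ ↦
    mul_eq_mul_of_mem_support_of_dvd_monomial_sub_C hb hf hd i j
  rw [hdm, map_nsmul]
  exact dvd_mul_left _ _

theorem irreducible_monomial_sub_C {s : Finset σ} (hs : s.gcd m = 1) (hb : b ≠ 0) :
    Irreducible (monomial m 1 - C b) := by
  classical
  have hm : m ≠ 0 := by
    rintro rfl
    exact zero_ne_one ((Finset.gcd_eq_zero_iff.mpr fun _ _ ↦ rfl).symm.trans hs)
  have hdeg : (monomial m 1 - C b).totalDegree = m.degree := totalDegree_monomial_sub_C m b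
  have hcoeff : coeff m (monomial m 1 - C b) = 1 := by simp [coeff_C, hm.symm]
  refine irreducible_of_forall_totalDegree_dvd (hcoeff ▸ isUnit_one) ?_ fun f hf ↦ ?_
  · rwa [hdeg, Ne, Finsupp.degree_eq_zero_iff]
  · rw [hdeg]
    exact degree_dvd_totalDegree_of_dvd_monomial_sub_C hs hb hf

theorem irreducible_prod_pow_sub_C_general (s : Finset σ) (m : σ → ℕ) (hs : s.gcd m = 1)
    (hb : b ≠ 0) : Irreducible ((∏ i ∈ s, (X i : MvPolynomial σ R) ^ m i) - C b) := by
  rw [prod_X_pow]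
  refine irreducible_monomial_sub_C (s := s) ?_ hb
  rw [← hs]
  exact Finset.gcd_congr rfl fun i hi ↦ Finsupp.indicator_of_mem hi _

end MonomialSubC

theorem irreducible_prod_pow_sub_C
    (K : Type*) [Field K] [IsAlgClosed K] [CharZero K]
    (α : ℕ) (hα : 1 ≤ α) (m : Fin α → ℕ) (hm : m ≠ 0)
    (hgcd : Finset.univ.gcd m = 1) (b : K) (hb : b ≠ 0) :
    Irreducible ((∏ i : Fin α, (X i : MvPolynomial (Fin α) K) ^ m i) - C b) :=
  irreducible_prod_pow_sub_C_general Finset.univ m hgcd hb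
end

section
/- Let K be an algebraically closed field of characteristic 0, let α ≥ 1, let m_1, …, m_α be natural numbers, not all zero, with greatest common divisor m, and let b ∈ K with b ≠ 0. Then there exist m distinct elements c_1, …, c_m ∈ K with c_j^m = b for each j, and the polynomial y_1^{m_1} ⋯ y_α^{m_α} − b factors in K[y_1, …, y_α] as the product over j = 1, …, m of the polynomials y_1^{m_1/m} ⋯ y_α^{m_α/m} − c_j; moreover each such factor is irreducible in K[y_1, …, y_α]. -/
open MvPolynomial

/-!
The substitution `T ↦ X ^ ν` embeds `R[T]` into `R[X₁, …, X_α]`, and for `ν` with coprime entries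
its image is closed under taking factors of elements with nonzero constant coefficient. Indeed,
each linear form vanishing at `ν` vanishes on the support of `p(X ^ ν)`; as the parts of top weight
of two factors cannot cancel in their product, the form also vanishes on the supports of the
factors. Their exponents are thus proportional to `ν`, hence multiples of `ν` by coprimality.
So `X ^ ν - c` is irreducible because `T - c` is, and the factorization is the image of
`T ^ m - b = ∏ j, (T - c j)`.
-/

theorem eq_gcd_nsmul_of_forall_mul_eq_mul {σ : Type*} {ν d : σ →₀ ℕ} (hν : ν.support.gcd ν = 1)
    (hd : ∀ i j, d i * ν j = ν i * d j) : d = ν.support.gcd d • ν := by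
  ext i
  calc d i = d i * ν.support.gcd ν := by rw [hν, mul_one]
    _ = ν.support.gcd fun j ↦ d i * ν j := by rw [Finset.gcd_mul_left, normalize_eq]
    _ = ν.support.gcd fun j ↦ ν i * d j := by simp only [hd]
    _ = ν.support.gcd d * ν i := by rw [Finset.gcd_mul_left, normalize_eq, mul_comm]

theorem ne_zero_of_support_gcd_eq_one {σ : Type*} {ν : σ →₀ ℕ} (hν : ν.support.gcd ν = 1) :
    ν ≠ 0 := by
  rintro rfl
  simp at hν

section Weight

variable {σ R M : Type*} [CommSemiring R] [NoZeroDivisors R] {f g : MvPolynomial σ R}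

-- Among the exponents of top weight, unique sums provide a pair whose product cannot cancel.
theorem exists_isMaxOn_add_mem_support_mul [AddCommMonoid M] [LinearOrder M]
    [IsOrderedCancelAddMonoid M] (w : (σ →₀ ℕ) →+ M) (hf : f ≠ 0) (hg : g ≠ 0) :
    ∃ a b, IsMaxOn w f.support a ∧ IsMaxOn w g.support b ∧ a + b ∈ (f * g).support := by
  classical
  obtain ⟨a₁, ha₁, hmax_f⟩ := f.support.exists_max_image w (support_nonempty.2 hf)
  obtain ⟨b₁, hb₁, hmax_g⟩ := g.support.exists_max_image w (support_nonempty.2 hg)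
  obtain ⟨a, ha, b, hb, hunique⟩ := UniqueSums.uniqueAdd_of_nonempty
    (A := {a ∈ f.support | w a = w a₁}) (B := {b ∈ g.support | w b = w b₁})
    ⟨a₁, Finset.mem_filter.2 ⟨ha₁, rfl⟩⟩ ⟨b₁, Finset.mem_filter.2 ⟨hb₁, rfl⟩⟩
  obtain ⟨ha, hwa⟩ := Finset.mem_filter.1 ha
  obtain ⟨hb, hwb⟩ := Finset.mem_filter.1 hb
  have hunique' : UniqueAdd f.support g.support a b := fun a' b' ha' hb' hsum ↦ by
    have hw : w a' + w b' = w a₁ + w b₁ := by rw [← map_add, hsum, map_add, hwa, hwb]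
    obtain ⟨hwa', hwb'⟩ := (add_eq_add_iff_eq_and_eq (hmax_f a' ha') (hmax_g b' hb')).1 hw
    exact hunique (Finset.mem_filter.2 ⟨ha', hwa'⟩) (Finset.mem_filter.2 ⟨hb', hwb'⟩) hsum
  have hcoeff : coeff (a + b) (f * g) = coeff a f * coeff b g :=
    AddMonoidAlgebra.coeff_mul_add_of_uniqueAdd hunique'
  refine ⟨a, b, fun d hd ↦ (hmax_f d hd).trans_eq hwa.symm,
    fun d hd ↦ (hmax_g d hd).trans_eq hwb.symm, ?_⟩
  rw [mem_support_iff, hcoeff]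
  exact mul_ne_zero (mem_support_iff.1 ha) (mem_support_iff.1 hb)

theorem weight_nonpos_of_mem_support_left [AddCommMonoid M] [LinearOrder M]
    [IsOrderedCancelAddMonoid M] (w : (σ →₀ ℕ) →+ M) (hfg : constantCoeff (f * g) ≠ 0)
    (hw : ∀ d ∈ (f * g).support, w d ≤ 0) {d : σ →₀ ℕ} (hd : d ∈ f.support) : w d ≤ 0 := by
  rw [map_mul] at hfg
  have hg : 0 ∈ g.support := mem_support_iff.2 (right_ne_zero_of_mul hfg)
  obtain ⟨a, b, ha, hb, hab⟩ := exists_isMaxOn_add_mem_support_mul w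
    (support_nonempty.1 ⟨d, hd⟩) (support_nonempty.1 ⟨0, hg⟩)
  calc w d ≤ w a := ha hd
    _ ≤ w a + w b := le_add_of_nonneg_right ((map_zero w).ge.trans (hb hg))
    _ = w (a + b) := (map_add w a b).symm
    _ ≤ 0 := hw _ hab

theorem weight_eq_zero_of_mem_support_left [AddCommGroup M] [LinearOrder M]
    [IsOrderedAddMonoid M] (w : (σ →₀ ℕ) →+ M) (hfg : constantCoeff (f * g) ≠ 0)
    (hw : ∀ d ∈ (f * g).support, w d = 0) {d : σ →₀ ℕ} (hd : d ∈ f.support) : w d = 0 := by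
  refine le_antisymm (weight_nonpos_of_mem_support_left w hfg (fun e he ↦ (hw e he).le) hd) ?_
  refine neg_nonpos.1 (weight_nonpos_of_mem_support_left (-w) hfg (fun e he ↦ ?_) hd)
  rw [AddMonoidHom.neg_apply, hw e he, neg_zero]

theorem exists_eq_nsmul_of_mem_support_left {ν : σ →₀ ℕ} (hν : ν.support.gcd ν = 1)
    (hfg : constantCoeff (f * g) ≠ 0) (hsupp : ∀ d ∈ (f * g).support, ∃ k : ℕ, d = k • ν)
    {d : σ →₀ ℕ} (hd : d ∈ f.support) : ∃ k : ℕ, d = k • ν := by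
  refine ⟨_, eq_gcd_nsmul_of_forall_mul_eq_mul hν fun i j ↦ ?_⟩
  let w : (σ →₀ ℕ) →+ ℤ :=
    { toFun e := e i * ν j - ν i * e j
      map_zero' := by simp
      map_add' e e' := by simp only [Finsupp.add_apply, Nat.cast_add]; ring }
  have hw : ∀ e ∈ (f * g).support, w e = 0 := fun e he ↦ by
    obtain ⟨k, rfl⟩ := hsupp e he
    change ((k • ν) i * ν j - ν i * (k • ν) j : ℤ) = 0
    simp only [Finsupp.smul_apply, smul_eq_mul, Nat.cast_mul]
    ring
  exact_mod_cast sub_eq_zero.1 (weight_eq_zero_of_mem_support_left w hfg hw hd)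

end Weight

section AevalMonomial

variable {σ R : Type*} [CommSemiring R] {ν : σ →₀ ℕ}

theorem aeval_monomial_one_monomial (ν : σ →₀ ℕ) (k : ℕ) (r : R) :
    Polynomial.aeval (monomial ν (1 : R)) (Polynomial.monomial k r) = monomial (k • ν) r := by
  rw [Polynomial.aeval_monomial, monomial_pow, one_pow, algebraMap_eq, C_mul_monomial, mul_one]

theorem coeff_nsmul_aeval_monomial (hν : ν ≠ 0) (p : Polynomial R) (k : ℕ) :
    coeff (k • ν) (Polynomial.aeval (monomial ν (1 : R)) p) = p.coeff k := by
  classical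
  induction p using Polynomial.induction_on' with
  | add p q hp hq => rw [map_add, coeff_add, hp, hq, Polynomial.coeff_add]
  | monomial n r =>
    have hinj : n • ν = k • ν ↔ n = k :=
      (nsmul_left_strictMono (pos_iff_ne_zero.2 hν)).injective.eq_iff
    simp only [aeval_monomial_one_monomial, coeff_monomial, Polynomial.coeff_monomial, hinj]

theorem aeval_monomial_injective (hν : ν ≠ 0) :
    Function.Injective (Polynomial.aeval (R := R) (monomial ν (1 : R))) := fun p q hpq ↦ by
  ext k
  rw [← coeff_nsmul_aeval_monomial hν p, hpq, coeff_nsmul_aeval_monomial hν]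

theorem mem_range_aeval_monomial_iff {f : MvPolynomial σ R} :
    f ∈ (Polynomial.aeval (R := R) (monomial ν (1 : R))).range ↔
      ∀ d ∈ f.support, ∃ k : ℕ, d = k • ν := by
  classical
  constructor
  · rintro ⟨p, rfl⟩ d hd
    induction p using Polynomial.induction_on' with
    | add p q hp hq =>
      rw [map_add] at hd
      exact (Finset.mem_union.1 (support_add hd)).elim hp hq
    | monomial n r =>
      replace hd := aeval_monomial_one_monomial ν n r ▸ hd
      exact ⟨n, Finset.mem_singleton.1 (support_monomial_subset hd)⟩
  · intro h
    rw [f.as_sum]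
    refine sum_mem fun d hd ↦ ?_
    obtain ⟨k, hk⟩ := h d hd
    exact ⟨Polynomial.monomial k (coeff d f), hk ▸ aeval_monomial_one_monomial ν k _⟩

end AevalMonomial

section Irreducible

variable {σ R : Type*} {ν : σ →₀ ℕ}

theorem exists_mul_eq_of_mul_eq_aeval_monomial [CommSemiring R] [NoZeroDivisors R]
    (hν : ν.support.gcd ν = 1) {p : Polynomial R} (hp : p.coeff 0 ≠ 0) {f g : MvPolynomial σ R}
    (hfg : f * g = Polynomial.aeval (monomial ν 1) p) :
    ∃ q r, Polynomial.aeval (monomial ν 1) q = f ∧ Polynomial.aeval (monomial ν 1) r = g ∧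
      q * r = p := by
  have hν₀ := ne_zero_of_support_gcd_eq_one hν
  have hconst : constantCoeff (f * g) ≠ 0 := by
    rwa [hfg, constantCoeff_eq, ← zero_nsmul ν, coeff_nsmul_aeval_monomial hν₀]
  have hsupp : ∀ d ∈ (f * g).support, ∃ k : ℕ, d = k • ν :=
    mem_range_aeval_monomial_iff.1 ⟨p, hfg.symm⟩
  obtain ⟨q, rfl⟩ := mem_range_aeval_monomial_iff.2 fun d hd ↦
    exists_eq_nsmul_of_mem_support_left hν hconst hsupp hd
  rw [mul_comm] at hconst hsupp
  obtain ⟨r, rfl⟩ := mem_range_aeval_monomial_iff.2 fun d hd ↦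
    exists_eq_nsmul_of_mem_support_left hν hconst hsupp hd
  refine ⟨q, r, rfl, rfl, aeval_monomial_injective hν₀ ?_⟩
  rw [map_mul]
  exact hfg

theorem irreducible_aeval_monomial [CommSemiring R] [NoZeroDivisors R]
    (hν : ν.support.gcd ν = 1) {p : Polynomial R} (hp : Irreducible p) (hp₀ : p.coeff 0 ≠ 0) :
    Irreducible (Polynomial.aeval (monomial ν (1 : R)) p) := by
  have : Nontrivial R := nontrivial_of_ne _ _ hp₀
  refine ⟨fun hunit ↦ hp.not_isUnit ?_, fun f g hfg ↦ ?_⟩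
  · obtain ⟨g, hg⟩ := hunit.exists_right_inv
    rw [← map_one (Polynomial.aeval (R := R) (monomial ν (1 : R)))] at hg
    obtain ⟨q, r, hq, -, hqr⟩ := exists_mul_eq_of_mul_eq_aeval_monomial hν (by simp) hg
    obtain rfl := aeval_monomial_injective (ne_zero_of_support_gcd_eq_one hν) hq
    exact .of_mul_eq_one r hqr
  · obtain ⟨q, r, rfl, rfl, rfl⟩ := exists_mul_eq_of_mul_eq_aeval_monomial hν hp₀ hfg.symm
    exact (hp.isUnit_or_isUnit rfl).imp (·.map _) (·.map _)

theorem irreducible_monomial_sub_C_s2 [CommRing R] [IsDomain R] (hν : ν.support.gcd ν = 1)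
    {c : R} (hc : c ≠ 0) : Irreducible (monomial ν 1 - C c) := by
  have h := irreducible_aeval_monomial hν (Polynomial.irreducible_X_sub_C c) (by simpa)
  rwa [map_sub, Polynomial.aeval_X, Polynomial.aeval_C, algebraMap_eq] at h

theorem irreducible_prod_X_pow_sub_C [CommRing R] [IsDomain R] [Fintype σ] {n : σ → ℕ}
    (hn : Finset.univ.gcd n = 1) {c : R} (hc : c ≠ 0) :
    Irreducible ((∏ i, (X i : MvPolynomial σ R) ^ n i) - C c) := by
  classical
  have hν : (Finsupp.equivFunOnFinite.symm n).support.gcd n = 1 := by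
    rw [← hn, Finset.gcd_eq_gcd_filter_ne_zero (s := Finset.univ)]
    congr 1
    ext
    simp
  have h := irreducible_monomial_sub_C_s2 (ν := Finsupp.equivFunOnFinite.symm n) hν hc
  rwa [monic_monomial_eq, Finsupp.prod_fintype _ _ fun _ ↦ pow_zero _] at h

end Irreducible

section Roots

variable {R : Type*} [CommRing R] [IsDomain R] {m : ℕ} {b : R}

theorem exists_injective_pow_eq [HasEnoughRootsOfUnity R m] (hb : b ≠ 0) (hroot : ∃ a, a ^ m = b) :
    ∃ c : Fin m → R, Function.Injective c ∧ ∀ j, c j ^ m = b := by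
  obtain ⟨ζ, hζ⟩ := HasEnoughRootsOfUnity.exists_primitiveRoot R m
  obtain ⟨a, rfl⟩ := hroot
  refine ⟨fun j ↦ ζ ^ (j : ℕ) * a, fun i j hij ↦ ?_, fun j ↦ ?_⟩
  · exact Fin.ext (hζ.pow_inj i.2 j.2 (mul_right_cancel₀ (ne_zero_pow i.pos.ne' hb) hij))
  · rw [mul_pow, pow_right_comm, hζ.pow_eq_one, one_pow, one_mul]

theorem X_pow_sub_C_eq_prod_of_injective (hm : m ≠ 0) {c : Fin m → R} (hc : Function.Injective c)
    (hcb : ∀ j, c j ^ m = b) :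
    (Polynomial.X ^ m - Polynomial.C b : Polynomial R) =
      ∏ j, (Polynomial.X - Polynomial.C (c j)) := by
  change _ = Lagrange.nodal Finset.univ c
  have hdegree : (Polynomial.X ^ m - Polynomial.C b).degree = (m : WithBot ℕ) :=
    Polynomial.degree_X_pow_sub_C (Nat.pos_of_ne_zero hm) b
  refine Polynomial.eq_of_degree_le_of_eval_index_eq Finset.univ hc.injOn ?_ ?_ ?_ fun j hj ↦ ?_
  · rw [hdegree, Finset.card_fin]
  · rw [hdegree, Lagrange.degree_nodal, Finset.card_fin]
  · rw [Polynomial.leadingCoeff_X_pow_sub_C (Nat.pos_of_ne_zero hm), Lagrange.nodal_monic]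
  · rw [Lagrange.eval_nodal_at_node hj]
    simp [hcb]

theorem pow_sub_algebraMap_eq_prod_of_injective {A : Type*} [CommRing A] [Algebra R A] (x : A)
    (hm : m ≠ 0) {c : Fin m → R} (hc : Function.Injective c) (hcb : ∀ j, c j ^ m = b) :
    x ^ m - algebraMap R A b = ∏ j, (x - algebraMap R A (c j)) := by
  simpa using congrArg (Polynomial.aeval x) (X_pow_sub_C_eq_prod_of_injective hm hc hcb)

end Roots

theorem prod_pow_sub_C_factorization_general {σ R : Type*} [Fintype σ] [CommRing R] [IsDomain R]
    {mexp : σ → ℕ} (hmexp : mexp ≠ 0) {m : ℕ} (hgcd : Finset.univ.gcd mexp = m)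
    [HasEnoughRootsOfUnity R m] {b : R} (hb : b ≠ 0) (hroot : ∃ a, a ^ m = b) :
    ∃ c : Fin m → R, Function.Injective c ∧ (∀ j, c j ^ m = b) ∧
      (∏ i, (X i : MvPolynomial σ R) ^ mexp i) - C b =
        ∏ j, ((∏ i, (X i : MvPolynomial σ R) ^ (mexp i / m)) - C (c j)) ∧
      ∀ j, Irreducible ((∏ i, (X i : MvPolynomial σ R) ^ (mexp i / m)) - C (c j)) := by
  obtain ⟨i, hi⟩ := Function.ne_iff.1 hmexp
  have hm : m ≠ 0 := hgcd ▸ Finset.gcd_ne_zero_iff.2 ⟨i, Finset.mem_univ i, hi⟩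
  have hcoprime : Finset.univ.gcd (fun i ↦ mexp i / m) = 1 :=
    hgcd ▸ Finset.gcd_div_eq_one (Finset.mem_univ i) hi
  have hpow : ∏ i, (X i : MvPolynomial σ R) ^ mexp i = (∏ i, X i ^ (mexp i / m)) ^ m := by
    have hdvd (i : σ) : m ∣ mexp i := hgcd ▸ Finset.gcd_dvd (Finset.mem_univ i)
    simp only [← Finset.prod_pow, ← pow_mul, Nat.div_mul_cancel (hdvd _)]
  obtain ⟨c, hc, hcb⟩ := exists_injective_pow_eq hb hroot
  refine ⟨c, hc, hcb, ?_, fun j ↦ ?_⟩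
  · rw [hpow]
    exact pow_sub_algebraMap_eq_prod_of_injective _ hm hc hcb
  · exact irreducible_prod_X_pow_sub_C hcoprime (pow_ne_zero_iff hm |>.1 (hcb j ▸ hb))

theorem prod_pow_sub_C_factorization
    (K : Type*) [Field K] [IsAlgClosed K] [CharZero K]
    (α : ℕ) (hα : 1 ≤ α) (mexp : Fin α → ℕ) (hmexp : mexp ≠ 0)
    (m : ℕ) (hgcd : Finset.univ.gcd mexp = m) (b : K) (hb : b ≠ 0) :
    ∃ c : Fin m → K, Function.Injective c ∧ (∀ j, c j ^ m = b) ∧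
      (∏ i : Fin α, (X i : MvPolynomial (Fin α) K) ^ mexp i) - C b =
        ∏ j : Fin m, ((∏ i : Fin α, (X i : MvPolynomial (Fin α) K) ^ (mexp i / m)) - C (c j)) ∧
      ∀ j : Fin m,
        Irreducible ((∏ i : Fin α, (X i : MvPolynomial (Fin α) K) ^ (mexp i / m)) - C (c j)) := by
  have hm : m ≠ 0 := hgcd ▸ Finset.gcd_ne_zero_iff.2 (by simpa using Function.ne_iff.1 hmexp)
  have : NeZero (m : K) := ⟨Nat.cast_ne_zero.2 hm⟩
  exact prod_pow_sub_C_factorization_general hmexp hgcd hb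
    (IsAlgClosed.exists_pow_nat_eq b (Nat.pos_of_ne_zero hm))
end

section
/- Let K be an algebraically closed field, let 1 ≤ r ≤ α, and let C = (c_{ij}) be an r × α matrix of integers whose rows are linearly independent over ℤ. Then the group homomorphism from (Kˣ)^α to (Kˣ)^r sending y = (y_1, …, y_α) to the tuple whose i-th coordinate is ∏_{j=1}^{α} y_j^{c_{ij}} is surjective; in particular, for every b ∈ (Kˣ)^r the system of equations ∏_{j=1}^{α} y_j^{c_{ij}} = b_i (i = 1, …, r) has a solution with all y_j nonzero. -/
/-!
Divisible abelian groups are injective `ℤ`-modules, and `Kˣ` is divisible when `K` is algebraically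
closed. The rows of `C` form a linearly independent family in `ℤ^α`, so they span a free subgroup on
which a homomorphism to `Kˣ` with prescribed values `b i` on the rows exists. By injectivity it
extends to all of `ℤ^α`, and the images of the standard basis vectors are the required `y j`.
-/

open Function

section InjectiveModule

variable {R Q ι : Type*} [Ring R] [AddCommGroup Q] [Module R Q]

theorem exists_linearMap_apply_eq_of_linearIndependent {M : Type*} [AddCommGroup M] [Module R M]
    (hQ : Module.Baer R Q) {v : ι → M} (hv : LinearIndependent R v) (b : ι → Q) :
    ∃ f : M →ₗ[R] Q, ∀ i, f (v i) = b i := by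
  obtain ⟨f, hf⟩ := hQ.extension_property (Finsupp.linearCombination R v) hv
    (Finsupp.linearCombination R b)
  refine ⟨f, fun i => ?_⟩
  simpa using LinearMap.congr_fun hf (Finsupp.single i 1)

theorem surjective_sum_smul_of_linearIndependent {κ : Type*} [Fintype κ]
    (hQ : Module.Baer R Q) {C : ι → κ → R} (hC : LinearIndependent R C) :
    Surjective fun (y : κ → Q) (i : ι) => ∑ j, C i j • y j := by
  classical
  intro b
  obtain ⟨f, hf⟩ := exists_linearMap_apply_eq_of_linearIndependent hQ hC b
  exact ⟨fun j => f fun k => if j = k then 1 else 0,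
    funext fun i => (f.pi_apply_eq_sum_univ (C i)).symm.trans (hf i)⟩

end InjectiveModule

section RootableGroup

instance additiveDivisibleByInt {G : Type*} [Group G] [RootableBy G ℤ] :
    DivisibleBy (Additive G) ℤ where
  div a n := .ofMul (RootableBy.root a.toMul n)
  div_zero a := congrArg Additive.ofMul (RootableBy.root_zero a.toMul)
  div_cancel a hn := congrArg Additive.ofMul (RootableBy.root_cancel a.toMul hn)

theorem monomial_map_surjective_general {G ι κ : Type*} [CommGroup G] [RootableBy G ℤ] [Fintype κ]
    {C : ι → κ → ℤ} (hC : LinearIndependent ℤ C) :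
    Surjective fun (y : κ → G) (i : ι) => ∏ j, y j ^ C i j :=
  -- A product of powers in `G` is definitionally a sum of multiples in `Additive G`.
  surjective_sum_smul_of_linearIndependent (Module.Baer.of_divisible (Additive G)) hC

end RootableGroup

section AlgClosed

variable {K : Type*} [Field K] [IsAlgClosed K]

theorem units_pow_surjective_of_isAlgClosed {n : ℕ} (hn : n ≠ 0) :
    Surjective fun z : Kˣ => z ^ n := by
  intro b
  obtain ⟨z, hz⟩ := IsAlgClosed.exists_pow_nat_eq (b : K) (Nat.pos_of_ne_zero hn)
  have hz_unit : IsUnit z := (isUnit_pow_iff hn).mp (hz ▸ b.isUnit)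
  exact ⟨hz_unit.unit, Units.ext hz⟩

noncomputable instance unitsRootableByInt : RootableBy Kˣ ℤ :=
  haveI : RootableBy Kˣ ℕ :=
    rootableByOfPowLeftSurj _ _ units_pow_surjective_of_isAlgClosed
  Group.rootableByIntOfRootableByNat Kˣ

end AlgClosed

theorem monomial_map_surjective
    (K : Type*) [Field K] [IsAlgClosed K]
    (r α : ℕ) (hr : 1 ≤ r) (hrα : r ≤ α)
    (C : Fin r → Fin α → ℤ) (hC : LinearIndependent ℤ C) :
    Function.Surjective
      (fun (y : Fin α → Kˣ) (i : Fin r) => ∏ j : Fin α, y j ^ C i j) ∧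
    ∀ b : Fin r → Kˣ, ∃ y : Fin α → Kˣ, ∀ i : Fin r, ∏ j : Fin α, y j ^ C i j = b i :=
  ⟨monomial_map_surjective_general hC,
    fun b => (monomial_map_surjective_general hC b).imp fun _ => congrFun⟩
end

section
/- Let K be an algebraically closed field of characteristic 0, let 1 ≤ r ≤ α, let C = (c_{ij}) be an r × α matrix of integers whose rows are linearly independent over ℤ, and let b_1, …, b_r be nonzero elements of K. Let R be the Laurent polynomial ring in α variables over K, realized as the group algebra of the additive group ℤ^α over K, and let I be the ideal of R generated by the r elements X^{C_i} − b_i, where C_i ∈ ℤ^α is the i-th row of C and X^{C_i} denotes the corresponding monomial (the group-algebra basis element at C_i). Then the Krull dimension of the quotient ring R / I equals α − r. -/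
/-!
Let `L ≤ G` be the subgroup generated by the exponents `C i`, and let `F` be the quotient of `G ⧸ L`
by its torsion, a free abelian group of rank `n = rank G - rank L`. The group algebra `K[F]` has
dimension `n`. Write `A` for the quotient of `K[G]` by the equations `X ^ C i = b i`.

* A splitting of `G → F` gives a map `K[F] → A`. It is integral, because every element of `G` has a
  nonzero multiple lying in `L` modulo the image of `F`. Hence `dim A ≤ n`.
* The multiplicative group of the algebraic closure `E` is divisible, so `C i ↦ b i` extends to a
  character `χ` of `G` with values in `E`. The map `A → E[F]`, `X ^ g ↦ χ g X ^ (class of g)` is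
  integral, because `E` is integral over `K` and the scalars `χ g` are invertible. Hence
  `n ≤ dim A`.

Both bounds use only incomparability of primes in integral ring maps, injective or not.
-/

open AddMonoidAlgebra

section IntegralRingHom

variable {R S : Type*} [CommRing R] [CommRing S]

lemma ringKrullDim_le_of_ringHom_isIntegral {f : R →+* S} (hf : f.IsIntegral) :
    ringKrullDim S ≤ ringKrullDim R := by
  algebraize [f]
  exact Order.krullDim_le_of_strictMono (PrimeSpectrum.comap (algebraMap R S)) fun p q hpq ↦
    Ideal.IsIntegral.comap_lt_comap (show p.asIdeal < q.asIdeal from hpq)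

lemma isIntegralElem_of_pow {f : R →+* S} {x : S} {n : ℕ} (hn : 0 < n)
    (hx : f.IsIntegralElem (x ^ n)) : f.IsIntegralElem x :=
  letI := f.toAlgebra
  IsIntegral.of_pow hn hx

lemma isIntegralElem_of_mul_eq_one_of_add_eq {f : R →+* S} {u v : S} {t : R} (huv : u * v = 1)
    (ht : u + v = f t) : f.IsIntegralElem u := by
  refine ⟨Polynomial.X ^ 2 - (Polynomial.C t * Polynomial.X - 1), ?_, ?_⟩
  · refine Polynomial.monic_X_pow_sub ?_
    compute_degree
    norm_num
  · simp only [Polynomial.eval₂_sub, Polynomial.eval₂_mul, Polynomial.eval₂_pow,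
      Polynomial.eval₂_X, Polynomial.eval₂_C, ← ht, Polynomial.eval₂_one]
    linear_combination -huv

end IntegralRingHom

section IntegralExponents

variable {K G R S : Type*} [CommRing K] [AddCommGroup G] [CommRing R] [CommRing S]

/-- The exponents `g` for which the images in `S` of both monomials `X ^ g` and `X ^ (-g)` under
`φ : K[G] → S` are integral over `R`. Asking for both makes this a subgroup; it is recorded as a
`ℤ`-submodule so that it can be compared with spans. -/
def integralExponents (f : R →+* S) (φ : K[G] →+* S) : Submodule ℤ G :=
  AddSubgroup.toIntSubmodule
    { carrier := {g | f.IsIntegralElem (φ (single g 1)) ∧ f.IsIntegralElem (φ (single (-g) 1))}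
      zero_mem' := by simp [← one_def, f.isIntegralElem_one]
      add_mem' := by
        rintro g h ⟨hg, hg'⟩ ⟨hh, hh'⟩
        rw [Set.mem_ofPred_eq, neg_add, ← mul_one (1 : K), ← single_mul_single,
          ← single_mul_single, map_mul, map_mul]
        exact ⟨hg.mul f hh, hg'.mul f hh'⟩
      neg_mem' := by
        rintro g ⟨hg, hg'⟩
        exact ⟨hg', by rwa [neg_neg]⟩ }

variable {f : R →+* S} {φ : K[G] →+* S}

lemma mem_integralExponents {g : G} : g ∈ integralExponents f φ ↔
    f.IsIntegralElem (φ (single g 1)) ∧ f.IsIntegralElem (φ (single (-g) 1)) :=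
  Iff.rfl

lemma mem_integralExponents_of_nsmul_mem {g : G} {n : ℕ} (hn : 0 < n)
    (hg : n • g ∈ integralExponents f φ) : g ∈ integralExponents f φ := by
  have monomial_nsmul (h : G) : φ (single (n • h) 1) = φ (single h 1) ^ n := by
    rw [← map_pow, single_pow, one_pow]
  rw [mem_integralExponents, ← smul_neg, monomial_nsmul, monomial_nsmul] at hg
  exact ⟨isIntegralElem_of_pow hn hg.1, isIntegralElem_of_pow hn hg.2⟩

lemma mem_integralExponents_of_zsmul_mem {g : G} {a : ℤ} (ha : a ≠ 0)
    (hg : a • g ∈ integralExponents f φ) : g ∈ integralExponents f φ := by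
  refine mem_integralExponents_of_nsmul_mem (Int.natAbs_pos.2 ha) ?_
  rw [← natCast_zsmul]
  rcases Int.natAbs_eq a with h | h
  · rwa [← h]
  · rwa [← neg_mem_iff, ← neg_smul, ← h]

lemma isIntegralElem_of_integralExponents_eq_top
    (hconst : ∀ k, f.IsIntegralElem (φ (single 0 k))) (htop : integralExponents f φ = ⊤)
    (z : K[G]) : f.IsIntegralElem (φ z) := by
  induction z using AddMonoidAlgebra.induction_linear with
  | zero => simpa using f.isIntegralElem_zero
  | add x y hx hy => simpa using hx.add f hy
  | single g k =>
    have hg : g ∈ integralExponents f φ := htop ▸ Submodule.mem_top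
    have hsplit : (single g k : K[G]) = single 0 k * single g 1 := by
      rw [single_mul_single, zero_add, mul_one]
    rw [hsplit, map_mul]
    exact (hconst k).mul f hg.1

end IntegralExponents

section GroupAlgebraOfFree

lemma ringKrullDim_addMonoidAlgebra_succ_le_of_surjective {K G H : Type*} [CommRing K]
    [Nontrivial K] [AddCommGroup G] [AddCommGroup H] [NoZeroDivisors K[G]]
    (π : G →+ H) (hπ : Function.Surjective π) {g : G} (hg : g ≠ 0) (hπg : π g = 0) :
    ringKrullDim K[H] + 1 ≤ ringKrullDim K[G] := by
  have hne : (single g 1 - 1 : K[G]) ≠ 0 := fun h ↦ by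
    have hcoeff := congrArg (fun z ↦ z.coeff 0) (sub_eq_zero.1 h)
    simp [one_def, hg] at hcoeff
  have hX : mapDomainRingHom K π (single g 1) = 1 := by simp [hπg, one_def]
  refine ringKrullDim_succ_le_of_surjective (mapDomainRingHom K π) ?_
    (mem_nonZeroDivisors_of_ne_zero hne) (by rw [map_sub, hX, map_one, sub_self])
  intro z
  obtain ⟨y, hy⟩ := Finsupp.mapDomain_surjective hπ z.coeff
  exact ⟨ofCoeff y, congrArg ofCoeff hy⟩

lemma ringKrullDim_add_natCast_le_ringKrullDim_addMonoidAlgebra (K : Type*) [CommRing K]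
    [IsDomain K] (n : ℕ) : ringKrullDim K + n ≤ ringKrullDim K[Fin n → ℤ] := by
  induction n with
  | zero => simpa using (ringKrullDim_eq_of_ringEquiv (uniqueRingEquiv (R := K) (Fin 0 → ℤ))).ge
  | succ n ih =>
    let tail : (Fin (n + 1) → ℤ) →+ (Fin n → ℤ) := (LinearMap.funLeft ℤ ℤ Fin.succ).toAddMonoidHom
    have htail : Function.Surjective tail :=
      LinearMap.funLeft_surjective_of_injective ℤ ℤ _ (Fin.succ_injective n)
    have hker : tail (Pi.single 0 1) = 0 := by ext i; simp [tail, LinearMap.funLeft_apply]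
    calc ringKrullDim K + (n + 1 : ℕ) = ringKrullDim K + n + 1 := by push_cast; rw [add_assoc]
      _ ≤ ringKrullDim K[Fin n → ℤ] + 1 := by gcongr
      _ ≤ ringKrullDim K[Fin (n + 1) → ℤ] :=
        ringKrullDim_addMonoidAlgebra_succ_le_of_surjective tail htail
          (Pi.single_ne_zero_iff.2 one_ne_zero) hker

/-- The `K`-algebra map sending the variable `x i` to `X ^ B i + X ^ (-B i)`. Unlike the inclusion
of polynomials into Laurent polynomials, it is integral. -/
noncomputable def addInvPolynomialMap (K : Type*) [CommRing K] {G ι : Type*} [AddCommGroup G]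
    (B : ι → G) : MvPolynomial ι K →ₐ[K] K[G] :=
  MvPolynomial.aeval fun i ↦ single (B i) 1 + single (-B i) 1

lemma addInvPolynomialMap_isIntegral (K : Type*) [CommRing K] {G ι : Type*} [AddCommGroup G]
    {B : ι → G} (hB : Submodule.span ℤ (Set.range B) = ⊤) :
    (addInvPolynomialMap K B).toRingHom.IsIntegral := by
  have hmonomial (i : ι) : single (B i) 1 + single (-B i) 1 =
      addInvPolynomialMap K B (MvPolynomial.X i) := by
    simp [addInvPolynomialMap]
  refine isIntegralElem_of_integralExponents_eq_top (φ := .id K[G]) (fun k ↦ ?_) ?_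
  · have hconst : single 0 k = addInvPolynomialMap K B (MvPolynomial.C k) :=
      ((addInvPolynomialMap K B).commutes k).symm
    exact hconst ▸ RingHom.isIntegralElem_map _
  · rw [eq_top_iff, ← hB, Submodule.span_le]
    rintro _ ⟨i, rfl⟩
    exact ⟨isIntegralElem_of_mul_eq_one_of_add_eq (by simp [single_mul_single, one_def])
      (hmonomial i), isIntegralElem_of_mul_eq_one_of_add_eq (by simp [single_mul_single, one_def])
      ((add_comm _ _).trans (hmonomial i))⟩

lemma ringKrullDim_addMonoidAlgebra_le_of_span_eq_top (K : Type*) [CommRing K]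
    [IsNoetherianRing K] {G ι : Type*} [AddCommGroup G] [Finite ι] {B : ι → G}
    (hB : Submodule.span ℤ (Set.range B) = ⊤) :
    ringKrullDim K[G] ≤ ringKrullDim K + Nat.card ι :=
  (ringKrullDim_le_of_ringHom_isIntegral (addInvPolynomialMap_isIntegral K hB)).trans_eq
    MvPolynomial.ringKrullDim_of_isNoetherianRing

lemma ringKrullDim_addMonoidAlgebra_pi_int (K : Type*) [CommRing K] [IsDomain K]
    [IsNoetherianRing K] (n : ℕ) : ringKrullDim K[Fin n → ℤ] = ringKrullDim K + n := by
  refine le_antisymm ?_ (ringKrullDim_add_natCast_le_ringKrullDim_addMonoidAlgebra K n)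
  simpa using ringKrullDim_addMonoidAlgebra_le_of_span_eq_top K (Pi.basisFun ℤ (Fin n)).span_eq

lemma ringKrullDim_addMonoidAlgebra_pi_int_of_field (K : Type*) [Field K] (n : ℕ) :
    ringKrullDim K[Fin n → ℤ] = n := by
  rw [ringKrullDim_addMonoidAlgebra_pi_int, ringKrullDim_eq_zero_of_field, zero_add]

end GroupAlgebraOfFree

section Saturation

lemma exists_surjective_apply_eq_zero_iff_exists_smul_mem {R M : Type*} [CommRing R] [IsDomain R]
    [IsPrincipalIdealRing R] [AddCommGroup M] [Module R M] [Module.Finite R M]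
    (L : Submodule R M) :
    ∃ π : M →ₗ[R] (Fin (Module.finrank R M - Module.finrank R L) → R), Function.Surjective π ∧
      ∀ x, π x = 0 ↔ ∃ a : R, a ≠ 0 ∧ a • x ∈ L := by
  let T := Submodule.torsion R (M ⧸ L)
  have hrank : Module.finrank R ((M ⧸ L) ⧸ T) = Module.finrank R M - Module.finrank R L := by
    rw [finrank_quotient_eq_of_le_torsion le_rfl, ← L.finrank_quotient_add_finrank,
      Nat.add_sub_cancel]
  let B := Module.finBasisOfFinrankEq R ((M ⧸ L) ⧸ T) hrank
  refine ⟨B.equivFun.toLinearMap ∘ₗ T.mkQ ∘ₗ L.mkQ,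
    B.equivFun.surjective.comp (T.mkQ_surjective.comp L.mkQ_surjective), fun x ↦ ?_⟩
  calc B.equivFun (T.mkQ (L.mkQ x)) = 0
    _ ↔ L.mkQ x ∈ T := by simp
    _ ↔ ∃ a : R, a ≠ 0 ∧ a • x ∈ L := by
      simp [T, ← Submodule.Quotient.mk_smul, Submonoid.smul_def]

end Saturation

section Characters

lemma units_zpow_surjective_of_isAlgClosed (K : Type*) [Field K] [IsAlgClosed K] {n : ℤ}
    (hn : n ≠ 0) : Function.Surjective fun u : Kˣ ↦ u ^ n := by
  have exists_root {m : ℕ} (hm : 0 < m) (u : Kˣ) : ∃ v : Kˣ, v ^ m = u := by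
    obtain ⟨z, hz⟩ := IsAlgClosed.exists_pow_nat_eq (u : K) hm
    have hz0 : z ≠ 0 := ne_zero_pow hm.ne' (hz ▸ u.ne_zero)
    exact ⟨Units.mk0 z hz0, Units.ext hz⟩
  intro u
  obtain ⟨m, rfl | rfl⟩ := n.eq_nat_or_neg
  · obtain ⟨v, hv⟩ := exists_root (m := m) (by lia) u
    exact ⟨v, by simpa using hv⟩
  · obtain ⟨v, hv⟩ := exists_root (m := m) (by lia) u⁻¹
    exact ⟨v, by simp [hv]⟩

lemma exists_linearMap_eq_of_divisibleBy {G D ι : Type*} [AddCommGroup G] [AddCommGroup D]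
    [DivisibleBy D ℤ] {C : ι → G} (hC : LinearIndependent ℤ C) (d : ι → D) :
    ∃ χ : G →ₗ[ℤ] D, ∀ i, χ (C i) = d i := by
  obtain ⟨χ, hχ⟩ := (Module.Baer.of_divisible D).extension_property
    (Finsupp.linearCombination ℤ C) hC (Finsupp.linearCombination ℤ d)
  exact ⟨χ, fun i ↦ by simpa using LinearMap.congr_fun hχ (Finsupp.single i 1)⟩

lemma exists_character_eq_of_isAlgClosed {K G ι : Type*} [Field K] [IsAlgClosed K]
    [AddCommGroup G] {C : ι → G} (hC : LinearIndependent ℤ C) (b : ι → Kˣ) :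
    ∃ χ : Multiplicative G →* Kˣ, ∀ i, χ (.ofAdd (C i)) = b i := by
  let _ : DivisibleBy (Additive Kˣ) ℤ :=
    divisibleByOfSMulRightSurj _ _ (units_zpow_surjective_of_isAlgClosed K)
  obtain ⟨χ, hχ⟩ := exists_linearMap_eq_of_divisibleBy hC fun i ↦ Additive.ofMul (b i)
  exact ⟨AddMonoidHom.toMultiplicativeLeft χ.toAddMonoidHom, hχ⟩

end Characters

section BinomialQuotient

variable {K G F ι : Type*} [CommRing K] [AddCommGroup G] [AddCommGroup F]

/-- The ideal of `K[G]` generated by the equations `X ^ C i = b i`. -/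
noncomputable def binomialIdeal (C : ι → G) (b : ι → Kˣ) : Ideal K[G] :=
  Ideal.span (Set.range fun i ↦ single (C i) 1 - algebraMap K K[G] (b i))

variable {C : ι → G} {b : ι → Kˣ}

lemma mk_single_eq_algebraMap (i : ι) :
    Ideal.Quotient.mk (binomialIdeal C b) (single (C i) 1) = algebraMap K _ (b i : K) :=
  Ideal.Quotient.eq.2 (Ideal.subset_span ⟨i, rfl⟩)

lemma mk_single_neg_eq_algebraMap (i : ι) :
    Ideal.Quotient.mk (binomialIdeal C b) (single (-C i) 1) = algebraMap K _ (↑(b i)⁻¹ : K) := by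
  refine left_inv_eq_right_inv (a := Ideal.Quotient.mk (binomialIdeal C b) (single (C i) 1)) ?_ ?_
  · rw [← map_mul, single_mul_single, neg_add_cancel, mul_one, ← one_def, map_one]
  · rw [mk_single_eq_algebraMap, ← map_mul, Units.mul_inv, map_one]

lemma span_range_le_integralExponents {R : Type*} [CommRing R]
    {f : R →+* K[G] ⧸ binomialIdeal C b}
    (hconst : ∀ k, f.IsIntegralElem (Ideal.Quotient.mk (binomialIdeal C b) (single 0 k))) :
    Submodule.span ℤ (Set.range C) ≤ integralExponents f (Ideal.Quotient.mk _) := by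
  rw [Submodule.span_le]
  rintro _ ⟨i, rfl⟩
  rw [SetLike.mem_coe, mem_integralExponents, mk_single_eq_algebraMap, mk_single_neg_eq_algebraMap]
  exact ⟨hconst _, hconst _⟩

lemma ringKrullDim_quotient_binomialIdeal_le [Module.Free ℤ F] {π : G →ₗ[ℤ] F}
    (hπ : Function.Surjective π)
    (hker : ∀ g, π g = 0 → ∃ a : ℤ, a ≠ 0 ∧ a • g ∈ Submodule.span ℤ (Set.range C)) :
    ringKrullDim (K[G] ⧸ binomialIdeal C b) ≤
      ringKrullDim K[F] := by
  obtain ⟨s, hs⟩ := π.exists_rightInverse_of_surjective (LinearMap.range_eq_top.2 hπ)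
  let q := Ideal.Quotient.mk (binomialIdeal C b)
  let f := q.comp (mapDomainRingHom K s.toAddMonoidHom)
  have f_single (m : F) (k : K) : f (single m k) = q (single (s m) k) := by simp [f]
  have const_integral (k : K) : f.IsIntegralElem (q (single 0 k)) := by
    rw [← map_zero s, ← f_single]
    exact f.isIntegralElem_map
  have section_mem (m : F) : s m ∈ integralExponents f q := by
    rw [mem_integralExponents, ← map_neg, ← f_single, ← f_single]
    exact ⟨f.isIntegralElem_map, f.isIntegralElem_map⟩
  have hspan := span_range_le_integralExponents const_integral
  have exponents_eq_top : integralExponents f q = ⊤ := by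
    refine eq_top_iff.2 fun g _ ↦ ?_
    have hdiff : π (g - s (π g)) = 0 := by
      rw [map_sub, ← LinearMap.comp_apply, hs, LinearMap.id_apply, sub_self]
    obtain ⟨a, ha, hag⟩ := hker _ hdiff
    rw [← sub_add_cancel g (s (π g))]
    exact add_mem (mem_integralExponents_of_zsmul_mem ha (hspan hag)) (section_mem _)
  refine ringKrullDim_le_of_ringHom_isIntegral (f := f) fun x ↦ ?_
  obtain ⟨z, rfl⟩ := Ideal.Quotient.mk_surjective x
  exact isIntegralElem_of_integralExponents_eq_top const_integral exponents_eq_top z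

variable {E : Type*} [CommRing E] [Algebra K E]

/-- The `K`-algebra map `X ^ g ↦ χ g X ^ π g` from `K[G]` to `E[F]`. -/
noncomputable def twistedMap (χ : Multiplicative G →* Eˣ) (π : G →+ F) :
    K[G] →ₐ[K] E[F] :=
  AddMonoidAlgebra.lift K _ G
    { toFun := fun g ↦ single (π g.toAdd) (χ g : E)
      map_one' := by simp [one_def]
      map_mul' := fun g h ↦ by simp [single_mul_single] }

lemma twistedMap_single_one (χ : Multiplicative G →* Eˣ) (π : G →+ F) (g : G) :
    twistedMap (K := K) χ π (single g 1) = single (π g) (χ (.ofAdd g) : E) := by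
  simp [twistedMap]

lemma binomialIdeal_le_ker_twistedMap {χ : Multiplicative G →* Eˣ} {π : G →+ F}
    (hχ : ∀ i, (χ (.ofAdd (C i)) : E) = algebraMap K E (b i)) (hπ : ∀ i, π (C i) = 0) :
    binomialIdeal C b ≤ RingHom.ker (twistedMap (K := K) χ π) := by
  rw [binomialIdeal, Ideal.span_le]
  rintro _ ⟨i, rfl⟩
  rw [SetLike.mem_coe, RingHom.mem_ker, map_sub, twistedMap_single_one, hχ, hπ, AlgHom.commutes]
  exact sub_self _

lemma twistedMap_isIntegral [Algebra.IsIntegral K E] (χ : Multiplicative G →* Eˣ) {π : G →+ F}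
    (hπ : Function.Surjective π) : (twistedMap (K := K) χ π).toRingHom.IsIntegral := by
  let f := (twistedMap (K := K) χ π).toRingHom
  have const_integral (c : E) : f.IsIntegralElem (single 0 c) := by
    have hc : IsIntegral K (single 0 c : E[F]) :=
      (Algebra.IsIntegral.isIntegral (R := K) c).map (singleZeroAlgHom (R := K))
    rw [IsIntegral, ← AlgHom.comp_algebraMap (twistedMap χ π)] at hc
    exact hc.of_comp
  have monomial_integral (m : F) : f.IsIntegralElem (single m 1) := by
    obtain ⟨g, rfl⟩ := hπ m
    have hsplit : (single (π g) 1 : E[F]) =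
        single 0 (↑(χ (.ofAdd g))⁻¹ : E) * f (single g 1) := by
      rw [show f (single g 1) = _ from twistedMap_single_one χ π g, single_mul_single, zero_add,
        Units.inv_mul]
    rw [hsplit]
    exact (const_integral _).mul f f.isIntegralElem_map
  exact isIntegralElem_of_integralExponents_eq_top (φ := .id E[F]) const_integral
    (eq_top_iff.2 fun m _ ↦ ⟨monomial_integral m, monomial_integral (-m)⟩)

lemma ringKrullDim_le_ringKrullDim_quotient_binomialIdeal [Algebra.IsIntegral K E]
    {χ : Multiplicative G →* Eˣ} {π : G →+ F} (hπ : Function.Surjective π)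
    (hχ : ∀ i, (χ (.ofAdd (C i)) : E) = algebraMap K E (b i)) (hπC : ∀ i, π (C i) = 0) :
    ringKrullDim E[F] ≤
      ringKrullDim (K[G] ⧸ binomialIdeal C b) := by
  let f := Ideal.Quotient.lift (binomialIdeal C b) (twistedMap (K := K) χ π).toRingHom
    (binomialIdeal_le_ker_twistedMap hχ hπC)
  have hf : (f.comp (Ideal.Quotient.mk (binomialIdeal C b))).IsIntegral :=
    twistedMap_isIntegral χ hπ
  exact ringKrullDim_le_of_ringHom_isIntegral fun z ↦ (hf z).of_comp

end BinomialQuotient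

theorem krullDim_laurent_quotient_monomial_equations_general {K G ι : Type*} [Field K]
    [AddCommGroup G] [Module.Finite ℤ G] [Fintype ι] {C : ι → G} (hC : LinearIndependent ℤ C)
    (b : ι → Kˣ) :
    ringKrullDim (K[G] ⧸ binomialIdeal C b) =
      (Module.finrank ℤ G - Fintype.card ι : ℕ) := by
  obtain ⟨π, hπ, hker⟩ := exists_surjective_apply_eq_zero_iff_exists_smul_mem
    (Submodule.span ℤ (Set.range C))
  obtain ⟨χ, hχ⟩ := exists_character_eq_of_isAlgClosed hC fun i ↦
    Units.map (algebraMap K (AlgebraicClosure K)).toMonoidHom (b i)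
  have hπC (i : ι) : π (C i) = 0 :=
    (hker _).2 ⟨1, one_ne_zero, by simpa using Submodule.subset_span (Set.mem_range_self i)⟩
  rw [← finrank_span_eq_card hC]
  apply le_antisymm
  · exact (ringKrullDim_quotient_binomialIdeal_le hπ fun g ↦ (hker g).1).trans_eq
      (ringKrullDim_addMonoidAlgebra_pi_int_of_field K _)
  · exact (ringKrullDim_addMonoidAlgebra_pi_int_of_field (AlgebraicClosure K) _).symm.trans_le
      (ringKrullDim_le_ringKrullDim_quotient_binomialIdeal (π := π.toAddMonoidHom) hπ
        (fun i ↦ congrArg Units.val (hχ i)) hπC)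

theorem krullDim_laurent_quotient_monomial_equations
    (K : Type*) [Field K] [IsAlgClosed K] [CharZero K]
    (r α : ℕ) (hr : 1 ≤ r) (hrα : r ≤ α)
    (C : Fin r → Fin α → ℤ) (hC : LinearIndependent ℤ C)
    (b : Fin r → K) (hb : ∀ i, b i ≠ 0)
    (I : Ideal (AddMonoidAlgebra K (Fin α → ℤ)))
    (hI : I = Ideal.span (Set.range fun i : Fin r =>
      (AddMonoidAlgebra.single (C i) 1 : AddMonoidAlgebra K (Fin α → ℤ)) -
        algebraMap K (AddMonoidAlgebra K (Fin α → ℤ)) (b i))) :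
    ringKrullDim (AddMonoidAlgebra K (Fin α → ℤ) ⧸ I) = (α - r : ℕ) := by
  obtain rfl : I = binomialIdeal C fun i ↦ Units.mk0 (b i) (hb i) := hI
  simpa only [Module.finrank_fin_fun, Fintype.card_fin] using
    krullDim_laurent_quotient_monomial_equations_general hC _
end

section
/- Let p be an exponential polynomial in one variable over ℂ whose zero set { z ∈ ℂ : p(z) = 0 } is finite and nonempty, say equal to {a_1, …, a_m} with the a_i distinct. Then there exist positive integers n_1, …, n_m and an exponential polynomial g in one variable over ℂ such that p(z) = (z − a_1)^{n_1} ⋯ (z − a_m)^{n_m} · exp(g(z)) for all z ∈ ℂ. -/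
/-- `IsExpPoly₁ p` says that `p : ℂ → ℂ` belongs to the smallest subring of the ring of
functions `ℂ → ℂ` containing all constant functions and the identity function, and closed
under post-composition with the complex exponential. -/
inductive IsExpPoly₁ : (ℂ → ℂ) → Prop
  | const (c : ℂ) : IsExpPoly₁ (fun _ => c)
  | id : IsExpPoly₁ (fun z => z)
  | add {f g : ℂ → ℂ} : IsExpPoly₁ f → IsExpPoly₁ g → IsExpPoly₁ (f + g)
  | neg {f : ℂ → ℂ} : IsExpPoly₁ f → IsExpPoly₁ (-f)
  | mul {f g : ℂ → ℂ} : IsExpPoly₁ f → IsExpPoly₁ g → IsExpPoly₁ (f * g)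
  | exp {f : ℂ → ℂ} : IsExpPoly₁ f → IsExpPoly₁ (fun z => Complex.exp (f z))

/-!
Removing the zeros of `p` leaves a zero-free entire function, so `p = P * exp h` with `P` a
polynomial and `h` entire, and it remains to see that `h` is an exponential polynomial.

Measure growth by exponential towers: nesting exponentials `k` deep gives growth of height `k + 1`,
and taking a logarithm lowers the height by one. The latter combines Jensen's formula, which bounds
the mean of the positive part of `re h` on large circles, with the Harnack inequality and the
Borel–Carathéodory theorem. Borel's theorem follows by induction with Wronskians: if
`∑ aᵢ * exp fᵢ = 0`, where the `aᵢ` and `fᵢ` have height `k + 1` and no difference `fᵢ - fⱼ`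
with `i ≠ j` has height `k`, then all `aᵢ` vanish.

Write `p = ∑ qᵢ * exp fᵢ`, where `qᵢ` and `fᵢ` have one level of exponentials less than `p`. By
Borel's theorem only the terms in which `fᵢ - h` has height `k` contribute to `P * exp h`. Fixing
such an `f₀`, the differences `fᵢ - f₀` are exponential polynomials of small growth, hence of small
nesting depth, again by Borel's theorem. Therefore `P * exp (h - f₀)` has smaller nesting depth
than `p`, and induction on the depth applies to `h - f₀`.
-/

namespace ExpPoly

open Complex Filter Topology Asymptotics

/-! ### Entire functions -/

section DSlope

variable {E : Type*} [NormedAddCommGroup E] [NormedSpace ℂ E] [CompleteSpace E] {f : ℂ → E}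

lemma differentiable_dslope (hf : Differentiable ℂ f) (a : ℂ) : Differentiable ℂ (dslope f a) :=
  differentiableOn_univ.1 ((differentiableOn_dslope univ_mem).2 hf.differentiableOn)

lemma differentiable_iterate_dslope (hf : Differentiable ℂ f) (a : ℂ) (n : ℕ) :
    Differentiable ℂ ((Function.swap dslope a)^[n] f) := by
  induction n with
  | zero => exact hf
  | succ n ih =>
    rw [Function.iterate_succ_apply']
    exact differentiable_dslope ih a

lemma eq_const_of_isLittleO_id (hf : Differentiable ℂ f) (hlo : f =o[cocompact ℂ] (id : ℂ → ℂ)) :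
    f = Function.const ℂ (f 0) := by
  have hconst : (fun _ : ℂ => f 0) =o[cocompact ℂ] (id : ℂ → ℂ) :=
    isLittleO_const_left.2 (.inr tendsto_norm_cocompact_atTop)
  have hslope : Tendsto (dslope f 0) (cocompact ℂ) (𝓝 0) := by
    refine (hlo.sub hconst).tendsto_inv_smul_nhds_zero.congr' ?_
    filter_upwards [(isCompact_singleton (x := (0 : ℂ))).compl_mem_cocompact] with z hz
    rw [dslope_of_ne f hz, slope_def_module, sub_zero, id]
  ext z
  have hz := sub_smul_dslope f 0 z
  rw [(differentiable_dslope hf 0).apply_eq_of_tendsto_cocompact z hslope, smul_zero] at hz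
  exact sub_eq_zero.1 hz.symm

end DSlope

lemma exists_eq_pow_mul_of_ne_zero {f : ℂ → ℂ} (hf : Differentiable ℂ f) (hf0 : f ≠ 0) (a : ℂ) :
    ∃ (n : ℕ) (g : ℂ → ℂ), Differentiable ℂ g ∧ g a ≠ 0 ∧ ∀ z, f z = (z - a) ^ n * g z := by
  obtain ⟨p, hp⟩ := hf.analyticAt a
  have hp0 : p ≠ 0 := by
    rintro rfl
    exact hf0 (AnalyticOnNhd.eq_of_eventuallyEq (fun z _ => hf.analyticAt z)
      (fun _ _ => analyticAt_const) hp.eventually_eq_zero)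
  exact ⟨p.order, _, differentiable_iterate_dslope hf a _, hp.iterate_dslope_fslope_ne_zero hp0,
    hp.eq_pow_order_mul_iterate_dslope⟩

lemma exists_eq_prod_pow_mul_of_ne_zero {ι : Type*} (s : Finset ι) (a : ι → ℂ) {f : ℂ → ℂ}
    (hf : Differentiable ℂ f) (hf0 : f ≠ 0) :
    ∃ (n : ι → ℕ) (g : ℂ → ℂ), Differentiable ℂ g ∧ (∀ i ∈ s, g (a i) ≠ 0) ∧
      ∀ z, f z = (∏ i ∈ s, (z - a i) ^ n i) * g z := by
  classical
  induction s using Finset.induction_on with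
  | empty => exact ⟨0, f, hf, by simp, by simp⟩
  | insert j s hj ih =>
    obtain ⟨n, g, hg, hga, hfg⟩ := ih
    have hg0 : g ≠ 0 := by
      rintro rfl
      exact hf0 (funext fun z => by simp [hfg z])
    obtain ⟨m, h, hh, hhj, hgh⟩ := exists_eq_pow_mul_of_ne_zero hg hg0 (a j)
    have hha : ∀ i ∈ s, h (a i) ≠ 0 := fun i hi h0 => hga i hi (by rw [hgh, h0, mul_zero])
    refine ⟨Function.update n j m, h, hh, (Finset.forall_mem_insert _ _ _).2 ⟨hhj, hha⟩,
      fun z => ?_⟩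
    have hprod : ∏ i ∈ s, (z - a i) ^ Function.update n j m i = ∏ i ∈ s, (z - a i) ^ n i :=
      Finset.prod_congr rfl fun i hi => by rw [Function.update_of_ne (ne_of_mem_of_not_mem hi hj)]
    rw [Finset.prod_insert hj, Function.update_self, hprod, hfg z, hgh z]
    ring

lemma pos_of_prod_sub_pow_eq_zero {R ι : Type*} [CommRing R] [IsDomain R] {s : Finset ι}
    {a : ι → R} (ha : Function.Injective a) {n : ι → ℕ} {i : ι}
    (h : ∏ j ∈ s, (a i - a j) ^ n j = 0) : 0 < n i := by
  obtain ⟨j, -, hj⟩ := Finset.prod_eq_zero_iff.1 h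
  obtain ⟨hij, hnj⟩ := pow_eq_zero_iff'.1 hj
  rw [ha (sub_eq_zero.1 hij)]
  exact Nat.pos_of_ne_zero hnj

/-- The Wronskian of two functions of a complex variable; it detects proportionality of entire
functions. -/
noncomputable def wronskian (u v : ℂ → ℂ) : ℂ → ℂ := u * deriv v - deriv u * v

lemma wronskian_self (u : ℂ → ℂ) : wronskian u u = 0 := by
  rw [wronskian, mul_comm, sub_self]

lemma wronskian_zero_right (u : ℂ → ℂ) : wronskian u 0 = 0 := by
  simp [wronskian]

lemma wronskian_sum {ι : Type*} {s : Finset ι} (u : ℂ → ℂ) {v : ι → ℂ → ℂ}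
    (hv : ∀ i ∈ s, Differentiable ℂ (v i)) :
    wronskian u (∑ i ∈ s, v i) = ∑ i ∈ s, wronskian u (v i) := by
  have hderiv : deriv (∑ i ∈ s, v i) = ∑ i ∈ s, deriv (v i) := by
    ext z
    rw [deriv_sum fun i hi => hv i hi z, Finset.sum_apply]
  simp only [wronskian, hderiv, Finset.mul_sum, Finset.sum_sub_distrib]

lemma differentiable_mul_exp_comp {a f : ℂ → ℂ} (ha : Differentiable ℂ a)
    (hf : Differentiable ℂ f) : Differentiable ℂ (a * exp ∘ f) :=
  ha.mul hf.cexp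

lemma deriv_mul_exp_comp {a f : ℂ → ℂ} (ha : Differentiable ℂ a) (hf : Differentiable ℂ f) (z : ℂ) :
    deriv (a * exp ∘ f) z = (deriv a z + a z * deriv f z) * exp (f z) := by
  have h : deriv (a * exp ∘ f) z = deriv a z * exp (f z) + a z * (exp (f z) * deriv f z) :=
    ((ha z).hasDerivAt.mul (hf z).hasDerivAt.cexp).deriv
  rw [h]
  ring

lemma wronskian_mul_exp_comp {a b f g : ℂ → ℂ} (ha : Differentiable ℂ a) (hb : Differentiable ℂ b)
    (hf : Differentiable ℂ f) (hg : Differentiable ℂ g) :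
    wronskian (a * exp ∘ f) (b * exp ∘ g) =
      (wronskian a b + a * b * (deriv g - deriv f)) * exp ∘ (f + g) := by
  ext z
  simp only [wronskian, Pi.sub_apply, Pi.mul_apply, Pi.add_apply, Function.comp_apply, exp_add,
    deriv_mul_exp_comp ha hf, deriv_mul_exp_comp hb hg]
  ring

lemma exists_eq_smul_of_wronskian_eq_zero {u v : ℂ → ℂ} (hu : Differentiable ℂ u)
    (hv : Differentiable ℂ v) (hu0 : u ≠ 0) (huv : wronskian u v = 0) : ∃ c : ℂ, v = c • u := by
  obtain ⟨x, hx⟩ := Function.ne_iff.1 hu0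
  obtain ⟨ε, hε, hball⟩ :=
    Metric.eventually_nhds_iff_ball.1 (hu.continuous.continuousAt.eventually_ne hx)
  have hquot_deriv : ∀ z ∈ Metric.ball x ε, HasDerivAt (v / u) 0 z := fun z hz => by
    have hnum : deriv v z * u z - v z * deriv u z = 0 := by
      have hW : u z * deriv v z - deriv u z * v z = 0 := congrFun huv z
      linear_combination hW
    simpa only [hnum, zero_div] using (hv z).hasDerivAt.div (hu z).hasDerivAt (hball z hz)
  have hquot : ∀ z ∈ Metric.ball x ε, v z / u z = v x / u x := fun z hz =>
    Metric.isOpen_ball.is_const_of_deriv_eq_zero (convex_ball x ε).isPreconnected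
      (fun w hw => (hquot_deriv w hw).differentiableAt.differentiableWithinAt)
      (fun w hw => (hquot_deriv w hw).deriv) hz (Metric.mem_ball_self hε)
  refine ⟨v x / u x, AnalyticOnNhd.eq_of_eventuallyEq (fun z _ => hv.analyticAt z)
    (fun z _ => (hu.const_smul _).analyticAt z) (z₀ := x) ?_⟩
  filter_upwards [Metric.ball_mem_nhds x hε] with z hz
  rw [Pi.smul_apply, smul_eq_mul, ← hquot z hz, div_mul_cancel₀ _ (hball z hz)]

lemma exists_eq_exp_comp {f : ℂ → ℂ} (hf : Differentiable ℂ f) (hf0 : ∀ z, f z ≠ 0) :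
    ∃ h : ℂ → ℂ, Differentiable ℂ h ∧ f = exp ∘ h := by
  have hlogDeriv : Differentiable ℂ (deriv f / f) := fun z => (hf.deriv z).div (hf z) (hf0 z)
  obtain ⟨h, h_zero, hh⟩ := hlogDeriv.isExactOn_univ.with_val_at 0 (log (f 0))
  have hhd : Differentiable ℂ h := fun z => (hh z trivial).differentiableAt
  have hW : wronskian f (exp ∘ h) = 0 := by
    ext z
    have hz : deriv (exp ∘ h) z = exp (h z) * (deriv f z / f z) := (hh z trivial).cexp.deriv
    have := hf0 z
    simp only [wronskian, Pi.sub_apply, Pi.mul_apply, Pi.zero_apply, hz, Function.comp_apply]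
    field_simp
    ring
  obtain ⟨c, hc⟩ : ∃ c : ℂ, exp ∘ h = c • f :=
    exists_eq_smul_of_wronskian_eq_zero hf hhd.cexp (Function.ne_iff.2 ⟨0, hf0 0⟩) hW
  have hc1 : c = 1 := by
    have h0 := congrFun hc 0
    simp only [Function.comp_apply, h_zero, exp_log (hf0 0), Pi.smul_apply, smul_eq_mul] at h0
    exact (mul_eq_right₀ (hf0 0)).1 h0.symm
  exact ⟨h, hhd, by rw [hc, hc1, one_smul]⟩

/-! ### Growth of logarithms of entire functions -/

section LogGrowth

open ValueDistribution
open Real (circleAverage)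

lemma logCounting_top_eq_zero {v : ℂ → ℂ} (hv : Differentiable ℂ v) : logCounting v ⊤ = 0 := by
  simpa using logCounting_add_analyticOn (f := 0) (fun _ => analyticAt_const.meromorphicAt)
    (hv.differentiableOn.analyticOn isOpen_univ)

lemma proximity_inv_top_le {v : ℂ → ℂ} (hv : Differentiable ℂ v) {R : ℝ} (hR : 1 ≤ R) :
    proximity v⁻¹ ⊤ R ≤ proximity v ⊤ R - Real.log ‖meromorphicTrailingCoeffAt v 0‖ := by
  have hjensen := characteristic_sub_characteristic_inv_of_ne_zero
    (fun z => (hv.analyticAt z).meromorphicAt) (by positivity : R ≠ 0)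
  simp only [characteristic, Pi.add_apply, logCounting_top_eq_zero hv, Pi.zero_apply] at hjensen
  have hcount : 0 ≤ logCounting v⁻¹ ⊤ R := logCounting_nonneg hR
  linarith

lemma proximity_exp_comp_top (g : ℂ → ℂ) (R : ℝ) :
    proximity (exp ∘ g) ⊤ R = circleAverage (fun z => max 0 (g z).re) 0 R := by
  simp only [proximity_top, Real.posLog, Function.comp_apply, norm_exp, Real.log_exp]

lemma proximity_top_le_of_norm_le_exp {u : ℂ → ℂ} {R M : ℝ}
    (hu : MeromorphicOn u (Metric.sphere 0 |R|)) (hM : 0 ≤ M)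
    (huM : ∀ z ∈ Metric.sphere (0 : ℂ) |R|, ‖u z‖ ≤ Real.exp M) : proximity u ⊤ R ≤ M := by
  rw [proximity_top]
  refine Real.circleAverage_mono_on_of_le_circle hu.circleIntegrable_posLog_norm fun z hz => ?_
  calc Real.posLog ‖u z‖ ≤ Real.posLog (Real.exp M) :=
        Real.posLog_le_posLog (norm_nonneg _) (huM z hz)
    _ = M := by rw [Real.posLog, Real.log_exp, max_eq_right hM]

lemma circleAverage_max_zero_re_le {u v g : ℂ → ℂ} (hu : Differentiable ℂ u)
    (hv : Differentiable ℂ v) (hv0 : v ≠ 0) (huv : v * exp ∘ g = u) {R : ℝ} (hR : 1 ≤ R) :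
    circleAverage (fun z => max 0 (g z).re) 0 R ≤
      proximity u ⊤ R + proximity v ⊤ R - Real.log ‖meromorphicTrailingCoeffAt v 0‖ := by
  obtain ⟨x, hx⟩ := Function.ne_iff.1 hv0
  have hum : Meromorphic u := fun z => (hu.analyticAt z).meromorphicAt
  have hvm : Meromorphic v := fun z => (hv.analyticAt z).meromorphicAt
  have hquot : exp ∘ g =ᶠ[codiscrete ℂ] u * v⁻¹ := by
    filter_upwards [AnalyticOnNhd.preimage_zero_mem_codiscrete (fun z _ => hv.analyticAt z) hx]
      with z hz
    rw [← huv, mul_right_comm]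
    simp [mul_inv_cancel₀ (show v z ≠ 0 from hz)]
  calc circleAverage (fun z => max 0 (g z).re) 0 R
      = proximity (u * v⁻¹) ⊤ R := by
        rw [← proximity_exp_comp_top, proximity_congr_codiscrete hquot (by positivity)]
    _ ≤ proximity u ⊤ R + proximity v⁻¹ ⊤ R := proximity_mul_top_le hum hvm.inv R
    _ ≤ _ := by linarith [proximity_inv_top_le hv hR]

lemma le_mul_circleAverage_max_zero {u : ℂ → ℝ} {c w : ℂ} {R : ℝ}
    (hu : InnerProductSpace.HarmonicOnNhd u (Metric.closedBall c R)) (hw : w ∈ Metric.ball c R) :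
    u w ≤ (R + ‖w - c‖) / (R - ‖w - c‖) * circleAverage (fun z => max 0 (u z)) c R := by
  have hR : 0 < R := Metric.pos_of_mem_ball hw
  have huc : ContinuousOn u (Metric.sphere c R) :=
    hu.continuousOn.mono Metric.sphere_subset_closedBall
  have hK : ContinuousOn (re ∘ herglotzRieszKernel c w) (Metric.sphere c R) := by
    simpa only [abs_of_pos hR] using
      continuous_re.comp_continuousOn (continuousOn_herglotzRieszKernel_sphere hw)
  rw [← smul_eq_mul, ← Real.circleAverage_fun_smul,
    ← hu.circleAverage_re_herglotzRieszKernel_smul hw]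
  refine Real.circleAverage_mono ((hK.smul huc).circleIntegrable hR.le)
    (ContinuousOn.circleIntegrable hR.le (by fun_prop)) fun z hz => ?_
  rw [abs_of_pos hR] at hz
  have hdist : ‖w - c‖ < R := by simpa [dist_eq_norm] using hw
  have hK_le := re_herglotzRieszKernel_le hz hw
  have hK_nonneg : 0 ≤ (herglotzRieszKernel c w z).re :=
    (div_nonneg (by linarith) (by positivity)).trans (le_re_herglotzRieszKernel hz hw)
  calc (herglotzRieszKernel c w z).re * u z
      ≤ (herglotzRieszKernel c w z).re * max 0 (u z) := by gcongr; exact le_max_right _ _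
    _ ≤ (R + ‖w - c‖) / (R - ‖w - c‖) * max 0 (u z) := by gcongr; exact hK_le

lemma norm_le_of_forall_re_le {g : ℂ → ℂ} (hg : Differentiable ℂ g) {r M : ℝ} (hM : 0 < M)
    (hre : ∀ w : ℂ, ‖w‖ < 2 * r + 1 → (g w).re ≤ M) {z : ℂ} (hz : ‖z‖ ≤ r) :
    ‖g z‖ ≤ 2 * M + 3 * ‖g 0‖ := by
  have hr : 0 ≤ r := (norm_nonneg z).trans hz
  have hgap : 0 < 2 * r + 1 - ‖z‖ := by linarith
  calc ‖g z‖ ≤ 2 * M * ‖z‖ / (2 * r + 1 - ‖z‖) +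
        ‖g 0‖ * (2 * r + 1 + ‖z‖) / (2 * r + 1 - ‖z‖) :=
        borelCaratheodory hM hg.differentiableOn (fun w hw => hre w (by simpa using hw))
          (by linarith) (by simpa using by linarith)
    _ ≤ 2 * M + 3 * ‖g 0‖ := by
        gcongr
        · rw [div_le_iff₀ hgap]
          gcongr
          linarith
        · rw [div_le_iff₀ hgap, mul_comm 3, mul_assoc]
          gcongr
          linarith

lemma exists_forall_norm_le_of_mul_exp_eq {u v g : ℂ → ℂ} (hu : Differentiable ℂ u)
    (hv : Differentiable ℂ v) (hg : Differentiable ℂ g) (hv0 : v ≠ 0) (huv : v * exp ∘ g = u) :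
    ∃ c : ℝ, 0 ≤ c ∧ ∀ r M : ℝ, 0 ≤ M →
      (∀ z : ℂ, ‖z‖ = 4 * r + 3 → ‖u z‖ ≤ Real.exp M ∧ ‖v z‖ ≤ Real.exp M) →
      ∀ z : ℂ, ‖z‖ ≤ r → ‖g z‖ ≤ 12 * M + c := by
  set L : ℝ := |Real.log ‖meromorphicTrailingCoeffAt v 0‖|
  refine ⟨6 * L + 2 + 3 * ‖g 0‖, by positivity, fun r M hM hbound z hz => ?_⟩
  have hr : 0 ≤ r := (norm_nonneg z).trans hz
  have hR : 0 < 4 * r + 3 := by linarith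
  have hprox : ∀ f : ℂ → ℂ, Differentiable ℂ f →
      (∀ z : ℂ, ‖z‖ = 4 * r + 3 → ‖f z‖ ≤ Real.exp M) → proximity f ⊤ (4 * r + 3) ≤ M :=
    fun f hf hfM => proximity_top_le_of_norm_le_exp (fun z _ => (hf.analyticAt z).meromorphicAt)
      hM fun z hz => hfM z (by simpa [abs_of_pos hR] using hz)
  have havg : circleAverage (fun z => max 0 (g z).re) 0 (4 * r + 3) ≤ 2 * M + L := by
    linarith [circleAverage_max_zero_re_le hu hv hv0 huv (by linarith : 1 ≤ 4 * r + 3),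
      hprox u hu fun z hz => (hbound z hz).1, hprox v hv fun z hz => (hbound z hz).2,
      neg_abs_le (Real.log ‖meromorphicTrailingCoeffAt v 0‖)]
  have hre : ∀ w : ℂ, ‖w‖ < 2 * r + 1 → (g w).re ≤ 3 * (2 * M + L) + 1 := fun w hw => by
    have hharnack := le_mul_circleAverage_max_zero (R := 4 * r + 3)
      (fun z _ => (hg.analyticAt z).harmonicAt_re) (mem_ball_zero_iff.2 (by linarith : ‖w‖ < _))
    have hfactor : (4 * r + 3 + ‖w‖) / (4 * r + 3 - ‖w‖) ≤ 3 := by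
      rw [div_le_iff₀ (by linarith)]
      linarith
    have havg_nonneg : 0 ≤ circleAverage (fun z => max 0 (g z).re) 0 (4 * r + 3) :=
      Real.circleAverage_nonneg_of_nonneg fun _ _ => le_max_left _ _
    rw [sub_zero] at hharnack
    nlinarith [mul_le_mul_of_nonneg_right hfactor havg_nonneg]
  linarith [norm_le_of_forall_re_le hg (by positivity) hre hz]

end LogGrowth

/-! ### Growth of tower type -/

lemma le_iterate_exp (k : ℕ) (x : ℝ) : x ≤ Real.exp^[k] x :=
  Function.id_le_iterate_of_id_le (fun y => (lt_add_one y).le.trans (Real.add_one_le_exp y)) k x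

lemma mul_exp_le_exp_mul {c y : ℝ} (hc : 1 ≤ c) (hy : 1 ≤ y) :
    c * Real.exp y ≤ Real.exp (c * y) := by
  have hc_le : c ≤ Real.exp ((c - 1) * y) := by
    nlinarith [Real.add_one_le_exp ((c - 1) * y)]
  calc c * Real.exp y ≤ Real.exp ((c - 1) * y) * Real.exp y := by gcongr
    _ = Real.exp (c * y) := by rw [← Real.exp_add]; ring_nf

lemma mul_iterate_exp_le (k : ℕ) {c x : ℝ} (hc : 1 ≤ c) (hx : 1 ≤ x) :
    c * Real.exp^[k] x ≤ Real.exp^[k] (c * x) := by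
  induction k with
  | zero => exact le_rfl
  | succ k ih =>
    simp only [Function.iterate_succ_apply']
    calc c * Real.exp (Real.exp^[k] x) ≤ Real.exp (c * Real.exp^[k] x) :=
          mul_exp_le_exp_mul hc (hx.trans (le_iterate_exp k x))
      _ ≤ Real.exp (Real.exp^[k] (c * x)) := Real.exp_le_exp.2 ih

/-- The `k`-fold iterated exponential of `C * (1 + log (1 + r))`: the growth scale that separates
exponential polynomials according to the depth of nesting of their exponentials. The logarithm
makes height `1` polynomial growth and height `0` sublinear growth. -/
noncomputable def expTower (k : ℕ) (C r : ℝ) : ℝ :=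
  Real.exp^[k] (C * (1 + Real.log (1 + r)))

lemma expTower_zero (C r : ℝ) : expTower 0 C r = C * (1 + Real.log (1 + r)) := rfl

lemma expTower_succ (k : ℕ) (C r : ℝ) : expTower (k + 1) C r = Real.exp (expTower k C r) :=
  Function.iterate_succ_apply' ..

section ExpTower

variable {C C' c r r' : ℝ}

lemma expTower_le_succ (k : ℕ) : expTower k C r ≤ expTower (k + 1) C r := by
  rw [expTower_succ]
  exact (lt_add_one _).le.trans (Real.add_one_le_exp _)

lemma expTower_le_expTower (k : ℕ) (hC : 0 ≤ C) (hCC' : C ≤ C') (hr : 0 ≤ r) (hrr' : r ≤ r') :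
    expTower k C r ≤ expTower k C' r' := by
  have hlog : 0 ≤ Real.log (1 + r) := Real.log_nonneg (by linarith)
  refine Real.exp_monotone.iterate k ?_
  gcongr
  exact hC.trans hCC'

lemma le_mul_one_add_log (hC : 0 ≤ C) (hr : 0 ≤ r) : C ≤ C * (1 + Real.log (1 + r)) :=
  le_mul_of_one_le_right hC (by linarith [Real.log_nonneg (by linarith : 1 ≤ 1 + r)])

lemma le_expTower (k : ℕ) (hC : 0 ≤ C) (hr : 0 ≤ r) : C ≤ expTower k C r :=
  (le_mul_one_add_log hC hr).trans (le_iterate_exp k _)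

lemma mul_expTower_le (k : ℕ) (hc : 1 ≤ c) (hC : 1 ≤ C) (hr : 0 ≤ r) :
    c * expTower k C r ≤ expTower k (c * C) r := by
  rw [expTower, expTower, mul_assoc]
  exact mul_iterate_exp_le k hc (hC.trans (le_mul_one_add_log (by linarith) hr))

lemma expTower_dilation_le (k : ℕ) (hC : 0 ≤ C) (hr : 0 ≤ r) :
    expTower k C (4 * r + 3) ≤ expTower k (3 * C) r := by
  have hlog : 0 ≤ Real.log (1 + r) := Real.log_nonneg (by linarith)
  have hlog_four : Real.log 4 ≤ 2 := by
    have : Real.log 4 = 2 * Real.log 2 := by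
      rw [show (4 : ℝ) = 2 ^ 2 by norm_num, Real.log_pow, Nat.cast_ofNat]
    linarith [Real.log_two_lt_d9]
  have hlog_dilate : Real.log (1 + (4 * r + 3)) = Real.log 4 + Real.log (1 + r) := by
    rw [← Real.log_mul (by norm_num) (by positivity)]
    ring_nf
  refine Real.exp_monotone.iterate k ?_
  rw [hlog_dilate]
  nlinarith

lemma exists_forall_norm_le_expTower_and {k : ℕ} {f g : ℂ → ℂ}
    (hf : ∃ C ≥ 1, ∀ z, ‖f z‖ ≤ expTower k C ‖z‖) (hg : ∃ C ≥ 1, ∀ z, ‖g z‖ ≤ expTower k C ‖z‖) :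
    ∃ C ≥ 1, ∀ z, ‖f z‖ ≤ expTower k C ‖z‖ ∧ ‖g z‖ ≤ expTower k C ‖z‖ := by
  obtain ⟨C, hC, hfC⟩ := hf
  obtain ⟨D, hD, hgD⟩ := hg
  exact ⟨max C D, le_max_of_le_left hC, fun z =>
    ⟨(hfC z).trans <| expTower_le_expTower k (by linarith) (le_max_left C D) (norm_nonneg z) le_rfl,
      (hgD z).trans <|
        expTower_le_expTower k (by linarith) (le_max_right C D) (norm_nonneg z) le_rfl⟩⟩

end ExpTower

/-- The entire functions whose modulus is bounded by an exponential tower of height `k`. -/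
def entireOfHeight (k : ℕ) : AddSubgroup (ℂ → ℂ) where
  carrier := {f | Differentiable ℂ f ∧ ∃ C ≥ 1, ∀ z, ‖f z‖ ≤ expTower k C ‖z‖}
  zero_mem' := ⟨differentiable_const 0, 1, le_rfl, fun z => by
    simpa using zero_le_one.trans (le_expTower k zero_le_one (norm_nonneg z))⟩
  add_mem' := by
    rintro f g ⟨hf, hf_bound⟩ ⟨hg, hg_bound⟩
    obtain ⟨C, hC, hfgC⟩ := exists_forall_norm_le_expTower_and hf_bound hg_bound
    refine ⟨hf.add hg, 2 * C, by linarith, fun z => ?_⟩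
    calc ‖f z + g z‖ ≤ expTower k C ‖z‖ + expTower k C ‖z‖ :=
          norm_add_le_of_le (hfgC z).1 (hfgC z).2
      _ = 2 * expTower k C ‖z‖ := (two_mul _).symm
      _ ≤ expTower k (2 * C) ‖z‖ := mul_expTower_le k one_le_two hC (norm_nonneg z)
  neg_mem' := by
    rintro f ⟨hf, C, hC, hfC⟩
    exact ⟨hf.neg, C, hC, by simpa using hfC⟩

section EntireOfHeight

variable {k : ℕ} {f g : ℂ → ℂ}

lemma const_mem_entireOfHeight (k : ℕ) (c : ℂ) : Function.const ℂ c ∈ entireOfHeight k :=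
  ⟨differentiable_const c, 1 + ‖c‖, by simp, fun z =>
    (by simp : ‖c‖ ≤ 1 + ‖c‖).trans (le_expTower k (by positivity) (norm_nonneg z))⟩

lemma entireOfHeight_mono : Monotone entireOfHeight :=
  monotone_nat_of_le_succ fun k _ ⟨hf, C, hC, hfC⟩ =>
    ⟨hf, C, hC, fun z => (hfC z).trans (expTower_le_succ k)⟩

lemma id_mem_entireOfHeight_one : id ∈ entireOfHeight 1 := by
  refine ⟨differentiable_id, 1, le_rfl, fun z => ?_⟩
  have hz : 0 < 1 + ‖z‖ := by positivity
  rw [expTower_succ, expTower_zero, one_mul]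
  calc ‖z‖ ≤ Real.exp (Real.log (1 + ‖z‖)) := by rw [Real.exp_log hz]; linarith
    _ ≤ Real.exp (1 + Real.log (1 + ‖z‖)) := Real.exp_le_exp.2 (by linarith)

lemma exp_comp_mem_entireOfHeight (hf : f ∈ entireOfHeight k) :
    exp ∘ f ∈ entireOfHeight (k + 1) := by
  obtain ⟨hf, C, hC, hfC⟩ := hf
  refine ⟨hf.cexp, C, hC, fun z => ?_⟩
  rw [Function.comp_apply, norm_exp, expTower_succ]
  exact Real.exp_le_exp.2 ((re_le_norm _).trans (hfC z))

lemma mul_mem_entireOfHeight (hf : f ∈ entireOfHeight (k + 1)) (hg : g ∈ entireOfHeight (k + 1)) :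
    f * g ∈ entireOfHeight (k + 1) := by
  obtain ⟨C, hC, hfgC⟩ := exists_forall_norm_le_expTower_and hf.2 hg.2
  refine ⟨hf.1.mul hg.1, 2 * C, by linarith, fun z => ?_⟩
  simp only [expTower_succ] at hfgC ⊢
  calc ‖f z * g z‖ ≤ Real.exp (expTower k C ‖z‖) * Real.exp (expTower k C ‖z‖) :=
        norm_mul_le_of_le (hfgC z).1 (hfgC z).2
    _ = Real.exp (2 * expTower k C ‖z‖) := by rw [← Real.exp_add, two_mul]
    _ ≤ Real.exp (expTower k (2 * C) ‖z‖) :=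
        Real.exp_le_exp.2 (mul_expTower_le k one_le_two hC (norm_nonneg z))

lemma deriv_mem_entireOfHeight (hf : f ∈ entireOfHeight k) : deriv f ∈ entireOfHeight k := by
  obtain ⟨hf, C, hC, hfC⟩ := hf
  refine ⟨hf.deriv, 3 * C, by linarith, fun z => ?_⟩
  have hcauchy : ‖deriv f z‖ ≤ expTower k C (4 * ‖z‖ + 3) / 1 := by
    refine norm_deriv_le_of_forall_mem_sphere_norm_le one_pos hf.diffContOnCl fun w hw => ?_
    have hw' : ‖w - z‖ = 1 := by simpa [dist_eq_norm] using hw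
    refine (hfC w).trans (expTower_le_expTower k (by linarith) le_rfl (norm_nonneg w) ?_)
    linarith [norm_le_norm_sub_add w z, norm_nonneg z]
  rw [div_one] at hcauchy
  exact hcauchy.trans (expTower_dilation_le k (by linarith) (norm_nonneg z))

lemma eq_const_of_mem_entireOfHeight_zero (hf : f ∈ entireOfHeight 0) :
    f = Function.const ℂ (f 0) := by
  obtain ⟨hf, C, -, hfC⟩ := hf
  have hone : (fun _ : ℝ => (1 : ℝ)) =o[atTop] id := isLittleO_const_id_atTop 1
  have hlog : (fun r => Real.log (1 + r)) =o[atTop] (id : ℝ → ℝ) :=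
    (Real.isLittleO_log_id_atTop.comp_tendsto
      (tendsto_atTop_add_const_left _ 1 tendsto_id)).trans_isBigO
        (hone.isBigO.add (isBigO_refl _ _))
  have htower : expTower 0 C =o[atTop] id := (hone.add hlog).const_mul_left C
  refine eq_const_of_isLittleO_id hf ?_
  exact (IsBigO.of_norm_le hfC).trans_isLittleO
    (isLittleO_norm_right.1 (htower.comp_tendsto (tendsto_norm_cocompact_atTop (E := ℂ))))

lemma mem_entireOfHeight_of_mul_exp_comp_eq {u v : ℂ → ℂ} (hu : u ∈ entireOfHeight (k + 1))
    (hv : v ∈ entireOfHeight (k + 1)) (hg : Differentiable ℂ g) (hv0 : v ≠ 0)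
    (huv : v * exp ∘ g = u) : g ∈ entireOfHeight k := by
  obtain ⟨C, hC, huvC⟩ := exists_forall_norm_le_expTower_and hu.2 hv.2
  obtain ⟨c, hc, hgc⟩ := exists_forall_norm_le_of_mul_exp_eq hu.1 hv.1 hg hv0 huv
  refine ⟨hg, (12 + c) * (3 * C), by nlinarith, fun z => ?_⟩
  set M := expTower k C (4 * ‖z‖ + 3)
  have hM : 1 ≤ M := hC.trans (le_expTower k (by linarith) (by positivity))
  have huvM : ∀ w : ℂ, ‖w‖ = 4 * ‖z‖ + 3 → ‖u w‖ ≤ Real.exp M ∧ ‖v w‖ ≤ Real.exp M :=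
    fun w hw => by simpa only [expTower_succ, hw] using huvC w
  calc ‖g z‖ ≤ 12 * M + c := hgc ‖z‖ M (by linarith) huvM z le_rfl
    _ ≤ (12 + c) * M := by nlinarith
    _ ≤ (12 + c) * expTower k (3 * C) ‖z‖ := by
        gcongr
        exact expTower_dilation_le k (by linarith) (norm_nonneg z)
    _ ≤ expTower k ((12 + c) * (3 * C)) ‖z‖ :=
        mul_expTower_le k (by linarith) (by linarith) (norm_nonneg z)

end EntireOfHeight

/-! ### Borel's theorem on linear independence of exponentials -/

section Borel

variable {k : ℕ} {ι : Type*} {s : Finset ι} {a f : ι → ℂ → ℂ}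

lemma exp_comp_add (f g : ℂ → ℂ) : exp ∘ (f + g) = exp ∘ f * exp ∘ g :=
  funext fun _ => exp_add _ _

lemma isUnit_exp_comp (f : ℂ → ℂ) : IsUnit (exp ∘ f) :=
  Pi.isUnit_iff.2 fun _ => (exp_ne_zero _).isUnit

lemma wronskian_mem_entireOfHeight {u v : ℂ → ℂ} (hu : u ∈ entireOfHeight (k + 1))
    (hv : v ∈ entireOfHeight (k + 1)) : wronskian u v ∈ entireOfHeight (k + 1) :=
  sub_mem (mul_mem_entireOfHeight hu (deriv_mem_entireOfHeight hv))
    (mul_mem_entireOfHeight (deriv_mem_entireOfHeight hu) hv)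

lemma sub_mem_entireOfHeight_of_wronskian_eq_zero {a b f g : ℂ → ℂ}
    (ha : a ∈ entireOfHeight (k + 1)) (hb : b ∈ entireOfHeight (k + 1))
    (hf : Differentiable ℂ f) (hg : Differentiable ℂ g) (ha0 : a ≠ 0) (hb0 : b ≠ 0)
    (hW : wronskian a b + a * b * (deriv g - deriv f) = 0) : g - f ∈ entireOfHeight k := by
  obtain ⟨c, hc⟩ : ∃ c : ℂ, b * exp ∘ g = c • (a * exp ∘ f) :=
    exists_eq_smul_of_wronskian_eq_zero (differentiable_mul_exp_comp ha.1 hf)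
      (differentiable_mul_exp_comp hb.1 hg)
      (by rwa [Ne, (isUnit_exp_comp f).mul_left_eq_zero])
      (by rw [wronskian_mul_exp_comp ha.1 hb.1 hf hg, hW, zero_mul])
  have hca : Function.const ℂ c * a ∈ entireOfHeight (k + 1) :=
    mul_mem_entireOfHeight (const_mem_entireOfHeight _ c) ha
  refine mem_entireOfHeight_of_mul_exp_comp_eq hca hb (hg.sub hf) hb0
    ((isUnit_exp_comp f).mul_left_injective ?_)
  change b * exp ∘ (g - f) * exp ∘ f = c • a * exp ∘ f
  rw [mul_assoc, ← exp_comp_add, sub_add_cancel, hc, smul_mul_assoc]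

-- Taking the Wronskian with the `j`-th term kills that term and preserves the shape of the others.
lemma sum_wronskian_mul_exp_eq_zero [DecidableEq ι] {j : ι} (hj : j ∉ s)
    (ha : ∀ i ∈ insert j s, Differentiable ℂ (a i)) (hf : ∀ i ∈ insert j s, Differentiable ℂ (f i))
    (hsum : ∑ i ∈ insert j s, a i * exp ∘ f i = 0) :
    ∑ i ∈ s, (wronskian (a j) (a i) + a j * a i * (deriv (f i) - deriv (f j))) *
      exp ∘ (f j + f i) = 0 := by
  have hjs := Finset.mem_insert_self j s
  have hs : ∀ i ∈ s, i ∈ insert j s := fun i => Finset.mem_insert_of_mem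
  calc _ = ∑ i ∈ s, wronskian (a j * exp ∘ f j) (a i * exp ∘ f i) :=
        Finset.sum_congr rfl fun i hi => (wronskian_mul_exp_comp (ha j hjs) (ha i (hs i hi))
          (hf j hjs) (hf i (hs i hi))).symm
    _ = wronskian (a j * exp ∘ f j) (∑ i ∈ insert j s, a i * exp ∘ f i) := by
        rw [wronskian_sum _ fun i hi => differentiable_mul_exp_comp (ha i hi) (hf i hi),
          Finset.sum_insert hj, wronskian_self, zero_add]
    _ = 0 := by rw [hsum, wronskian_zero_right]

theorem eq_zero_of_sum_mul_exp_eq_zero (ha : ∀ i ∈ s, a i ∈ entireOfHeight (k + 1))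
    (hf : ∀ i ∈ s, f i ∈ entireOfHeight (k + 1))
    (hsep : (s : Set ι).Pairwise fun i j => f i - f j ∉ entireOfHeight k)
    (hsum : ∑ i ∈ s, a i * exp ∘ f i = 0) : ∀ i ∈ s, a i = 0 := by
  classical
  induction s using Finset.induction_on generalizing a f with
  | empty => simp
  | insert j s hj ih =>
    rw [Finset.coe_insert, Set.pairwise_insert_of_notMem hj] at hsep
    obtain ⟨haj, has⟩ := (Finset.forall_mem_insert _ _ _).1 ha
    obtain ⟨hfj, hfs⟩ := (Finset.forall_mem_insert _ _ _).1 hf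
    rw [Finset.forall_mem_insert]
    by_cases haj0 : a j = 0
    · rw [Finset.sum_insert hj, haj0, zero_mul, zero_add] at hsum
      exact ⟨haj0, ih has hfs hsep.1 hsum⟩
    have hcoeff : ∀ i ∈ s,
        wronskian (a j) (a i) + a j * a i * (deriv (f i) - deriv (f j)) = 0 := by
      refine ih (fun i hi => add_mem (wronskian_mem_entireOfHeight haj (has i hi)) ?_)
        (fun i hi => add_mem hfj (hfs i hi)) (fun i hi l hl hil => ?_)
        (sum_wronskian_mul_exp_eq_zero hj (fun i hi => (ha i hi).1) (fun i hi => (hf i hi).1) hsum)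
      · exact mul_mem_entireOfHeight (mul_mem_entireOfHeight haj (has i hi))
          (sub_mem (deriv_mem_entireOfHeight (hfs i hi)) (deriv_mem_entireOfHeight hfj))
      · simpa only [add_sub_add_left_eq_sub] using hsep.1 hi hl hil
    have has0 : ∀ i ∈ s, a i = 0 := fun i hi => by
      by_contra hai
      exact (hsep.2 i hi).2 (sub_mem_entireOfHeight_of_wronskian_eq_zero haj (has i hi)
        hfj.1 (hfs i hi).1 haj0 hai (hcoeff i hi))
    have hrest : ∑ i ∈ s, a i * exp ∘ f i = 0 :=
      Finset.sum_eq_zero fun i hi => by rw [has0 i hi, zero_mul]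
    rw [Finset.sum_insert hj, hrest, add_zero, (isUnit_exp_comp _).mul_left_eq_zero] at hsum
    exact absurd hsum haj0

open Classical in
theorem sum_filter_mul_exp_eq_zero (ha : ∀ i ∈ s, a i ∈ entireOfHeight (k + 1))
    (hf : ∀ i ∈ s, f i ∈ entireOfHeight (k + 1)) (hsum : ∑ i ∈ s, a i * exp ∘ f i = 0)
    {j : ι} (hj : j ∈ s) : ∑ i ∈ s with f i - f j ∈ entireOfHeight k, a i * exp ∘ f i = 0 := by
  let cls : ι → (ℂ → ℂ) ⧸ entireOfHeight k := fun i => (f i : (ℂ → ℂ) ⧸ entireOfHeight k)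
  have hcls : ∀ i l, cls i = cls l ↔ f i - f l ∈ entireOfHeight k := fun i l =>
    (eq_comm.trans QuotientAddGroup.eq).trans (by rw [neg_add_eq_sub])
  have hout : ∀ i, f i - (cls i).out ∈ entireOfHeight k := fun i => by
    rw [← neg_add_eq_sub, ← QuotientAddGroup.eq, QuotientAddGroup.out_eq']
  let coeff : (ℂ → ℂ) ⧸ entireOfHeight k → ℂ → ℂ := fun q =>
    ∑ i ∈ s with cls i = q, a i * exp ∘ (f i - q.out)
  have hgroup : ∀ q, coeff q * exp ∘ q.out = ∑ i ∈ s with cls i = q, a i * exp ∘ f i := fun q => by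
    simp only [coeff, Finset.sum_mul, mul_assoc, ← exp_comp_add, sub_add_cancel]
  have hcoeff : coeff (cls j) = 0 := by
    refine eq_zero_of_sum_mul_exp_eq_zero (k := k) (s := s.image cls) (a := coeff)
      (f := Quotient.out) ?_ ?_ ?_ ?_ _ (Finset.mem_image_of_mem cls hj)
    · intro q hq
      refine sum_mem fun i hi => ?_
      obtain ⟨his, rfl⟩ := Finset.mem_filter.1 hi
      exact mul_mem_entireOfHeight (ha i his) (exp_comp_mem_entireOfHeight (hout i))
    · refine Finset.forall_mem_image.2 fun i hi => ?_
      simpa using sub_mem (hf i hi) (entireOfHeight_mono k.le_succ (hout i))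
    · intro q _ q' _ hqq' hmem
      rw [← neg_add_eq_sub, ← QuotientAddGroup.eq] at hmem
      simp only [QuotientAddGroup.out_eq'] at hmem
      exact hqq' hmem.symm
    · simp only [hgroup]
      rw [Finset.sum_fiberwise_of_maps_to fun i => Finset.mem_image_of_mem cls, hsum]
  simp only [← hcls]
  rw [← hgroup, hcoeff, zero_mul]

open Classical in
theorem sum_filter_mul_exp_sub_eq {p h : ℂ → ℂ} (ha : ∀ i ∈ s, a i ∈ entireOfHeight (k + 1))
    (hf : ∀ i ∈ s, f i ∈ entireOfHeight (k + 1)) (hp : p ∈ entireOfHeight (k + 1))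
    (hh : h ∈ entireOfHeight (k + 1)) (hsum : ∑ i ∈ s, a i * exp ∘ f i = p * exp ∘ h) :
    ∑ i ∈ s with f i - h ∈ entireOfHeight k, a i * exp ∘ (f i - h) = p := by
  have hgroup := sum_filter_mul_exp_eq_zero (k := k) (s := s.insertNone)
    (a := fun o => o.elim (-p) a) (f := fun o => o.elim h f) (j := none)
    (Finset.forall_mem_insertNone.2 ⟨neg_mem hp, ha⟩) (Finset.forall_mem_insertNone.2 ⟨hh, hf⟩)
    (by simp [Finset.sum_insertNone, hsum]) Finset.none_mem_insertNone
  rw [Finset.sum_filter, Finset.sum_insertNone] at hgroup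
  simp only [Option.elim_none, sub_self, zero_mem, if_true, neg_mul, neg_add_eq_zero] at hgroup
  refine (isUnit_exp_comp h).mul_left_injective ?_
  simp only [Finset.sum_mul, mul_assoc, ← exp_comp_add, sub_add_cancel]
  rw [Finset.sum_filter]
  exact hgroup.symm

end Borel

/-! ### Exponential polynomials by nesting depth -/

lemma mem_span_of_mem_adjoin_union {K A : Type*} [CommSemiring K] [CommSemiring A] [Algebra K A]
    {R : Subalgebra K A} {M : Submonoid A} {p : A}
    (hp : p ∈ Algebra.adjoin K (R ∪ M : Set A)) : p ∈ Submodule.span R (M : Set A) := by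
  have hle : Algebra.adjoin K (R ∪ M : Set A) ≤
      (Algebra.adjoin R (M : Set A)).restrictScalars K :=
    Algebra.adjoin_le (Set.union_subset
      (fun g hg => Subalgebra.algebraMap_mem (Algebra.adjoin R (M : Set A)) ⟨g, hg⟩)
      Algebra.subset_adjoin)
  have hp' : p ∈ Subalgebra.toSubmodule (Algebra.adjoin R (M : Set A)) := hle hp
  rwa [Algebra.adjoin_eq_span, Submonoid.closure_eq] at hp'

/-- The exponential polynomials in which exponentials are nested at most `k` deep: polynomials for
`k = 0`, and polynomials in `f` and `exp ∘ f` with `f` of height at most `k` for height `k + 1`. -/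
noncomputable def expPolyOfHeight : ℕ → Subalgebra ℂ (ℂ → ℂ)
  | 0 => Algebra.adjoin ℂ {id}
  | k + 1 => Algebra.adjoin ℂ (expPolyOfHeight k ∪ (exp ∘ ·) '' expPolyOfHeight k)

section ExpPolyOfHeight

variable {k : ℕ} {f p h : ℂ → ℂ}

lemma expPolyOfHeight_mono : Monotone expPolyOfHeight :=
  monotone_nat_of_le_succ fun _ _ hf => Algebra.subset_adjoin (.inl hf)

lemma exp_comp_mem_expPolyOfHeight (hf : f ∈ expPolyOfHeight k) :
    exp ∘ f ∈ expPolyOfHeight (k + 1) :=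
  Algebra.subset_adjoin (.inr ⟨f, hf, rfl⟩)

lemma id_mem_expPolyOfHeight (k : ℕ) : id ∈ expPolyOfHeight k :=
  expPolyOfHeight_mono k.zero_le (Algebra.self_mem_adjoin_singleton ℂ id)

lemma const_mem_expPolyOfHeight (k : ℕ) (c : ℂ) : Function.const ℂ c ∈ expPolyOfHeight k :=
  algebraMap_mem (expPolyOfHeight k) c

lemma exists_mem_expPolyOfHeight_of_isExpPoly₁ (hf : IsExpPoly₁ f) :
    ∃ k, f ∈ expPolyOfHeight k := by
  induction hf with
  | const c => exact ⟨0, const_mem_expPolyOfHeight 0 c⟩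
  | id => exact ⟨0, id_mem_expPolyOfHeight 0⟩
  | add _ _ ihf ihg =>
    obtain ⟨k, hk⟩ := ihf
    obtain ⟨l, hl⟩ := ihg
    exact ⟨max k l, add_mem (expPolyOfHeight_mono (le_max_left k l) hk)
      (expPolyOfHeight_mono (le_max_right k l) hl)⟩
  | neg _ ih => exact ih.imp fun _ => neg_mem
  | mul _ _ ihf ihg =>
    obtain ⟨k, hk⟩ := ihf
    obtain ⟨l, hl⟩ := ihg
    exact ⟨max k l, mul_mem (expPolyOfHeight_mono (le_max_left k l) hk)
      (expPolyOfHeight_mono (le_max_right k l) hl)⟩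
  | exp _ ih =>
    obtain ⟨k, hk⟩ := ih
    exact ⟨k + 1, exp_comp_mem_expPolyOfHeight hk⟩

lemma isExpPoly₁_of_mem_adjoin {S : Set (ℂ → ℂ)} (hS : ∀ f ∈ S, IsExpPoly₁ f)
    (hf : f ∈ Algebra.adjoin ℂ S) : IsExpPoly₁ f :=
  Algebra.adjoin_induction hS .const (fun _ _ _ _ => .add) (fun _ _ _ _ => .mul) hf

lemma isExpPoly₁_of_mem_expPolyOfHeight (hf : f ∈ expPolyOfHeight k) : IsExpPoly₁ f := by
  induction k generalizing f with
  | zero => exact isExpPoly₁_of_mem_adjoin (by rintro _ rfl; exact .id) hf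
  | succ k ih =>
    refine isExpPoly₁_of_mem_adjoin ?_ hf
    rintro _ (hg | ⟨g, hg, rfl⟩)
    · exact ih hg
    · exact (ih hg).exp

lemma mem_entireOfHeight_of_mem_adjoin {S : Set (ℂ → ℂ)} (hS : S ⊆ entireOfHeight (k + 1))
    (hf : f ∈ Algebra.adjoin ℂ S) : f ∈ entireOfHeight (k + 1) :=
  Algebra.adjoin_induction (fun _ hg => hS hg) (const_mem_entireOfHeight _)
    (fun _ _ _ _ => add_mem) (fun _ _ _ _ => mul_mem_entireOfHeight) hf

lemma mem_entireOfHeight_of_mem_expPolyOfHeight (hf : f ∈ expPolyOfHeight k) :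
    f ∈ entireOfHeight (k + 1) := by
  induction k generalizing f with
  | zero =>
    exact mem_entireOfHeight_of_mem_adjoin (Set.singleton_subset_iff.2 id_mem_entireOfHeight_one) hf
  | succ k ih =>
    refine mem_entireOfHeight_of_mem_adjoin ?_ hf
    rintro _ (hg | ⟨g, hg, rfl⟩)
    · exact entireOfHeight_mono (k + 1).le_succ (ih hg)
    · exact exp_comp_mem_entireOfHeight (ih hg)

lemma exists_sum_mul_exp_of_mem_adjoin {R : Subalgebra ℂ (ℂ → ℂ)}
    (hp : p ∈ Algebra.adjoin ℂ (R ∪ (exp ∘ ·) '' (R : Set (ℂ → ℂ)))) :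
    ∃ (s : Finset R) (q : R → R), ∑ f ∈ s, (q f : ℂ → ℂ) * exp ∘ (f : ℂ → ℂ) = p := by
  let expMonoid : Submonoid (ℂ → ℂ) :=
    { carrier := (exp ∘ ·) '' (R : Set (ℂ → ℂ))
      one_mem' := ⟨0, R.zero_mem, funext fun _ => exp_zero⟩
      mul_mem' := by
        rintro _ _ ⟨f, hf, rfl⟩ ⟨g, hg, rfl⟩
        exact ⟨f + g, add_mem hf hg, exp_comp_add f g⟩ }
  have hspan : p ∈ Submodule.span R ((exp ∘ ·) '' (R : Set (ℂ → ℂ))) :=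
    mem_span_of_mem_adjoin_union (M := expMonoid) hp
  rw [Set.image_eq_range] at hspan
  obtain ⟨q, hq⟩ := Finsupp.mem_span_range_iff_exists_finsupp.1 hspan
  exact ⟨q.support, q, hq⟩

lemma exists_sum_mul_exp_sub_of_mul_exp_mem (hp : p ∈ entireOfHeight (k + 1))
    (hh : h ∈ entireOfHeight (k + 1)) (hph : p * exp ∘ h ∈ expPolyOfHeight (k + 1)) :
    ∃ (s : Finset (expPolyOfHeight k)) (q : expPolyOfHeight k → expPolyOfHeight k),
      (∀ f ∈ s, (f : ℂ → ℂ) - h ∈ entireOfHeight k) ∧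
        ∑ f ∈ s, (q f : ℂ → ℂ) * exp ∘ ((f : ℂ → ℂ) - h) = p := by
  classical
  obtain ⟨s, q, hsum⟩ := exists_sum_mul_exp_of_mem_adjoin hph
  exact ⟨_, q, fun f hf => (Finset.mem_filter.1 hf).2, sum_filter_mul_exp_sub_eq
    (fun f _ => mem_entireOfHeight_of_mem_expPolyOfHeight (q f).2)
    (fun f _ => mem_entireOfHeight_of_mem_expPolyOfHeight f.2) hp hh hsum⟩

lemma exp_comp_mem_expPolyOfHeight_of_mem_entireOfHeight (hf : f ∈ expPolyOfHeight k)
    (hfk : f ∈ entireOfHeight k) : exp ∘ f ∈ expPolyOfHeight k := by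
  induction k generalizing f with
  | zero =>
    rw [eq_const_of_mem_entireOfHeight_zero hfk, Function.comp_const]
    exact const_mem_expPolyOfHeight 0 _
  | succ k ih =>
    have hf' : f * exp ∘ (0 : ℂ → ℂ) ∈ expPolyOfHeight (k + 1) :=
      mul_mem hf (exp_comp_mem_expPolyOfHeight (zero_mem _))
    obtain ⟨s, q, hs, hsum⟩ := exists_sum_mul_exp_sub_of_mul_exp_mem hfk (zero_mem _) hf'
    simp only [sub_zero] at hs hsum
    have hfk' : f ∈ expPolyOfHeight k := by
      rw [← hsum]
      exact sum_mem fun g hg => mul_mem (q g).2 (ih g.2 (hs g hg))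
    exact exp_comp_mem_expPolyOfHeight hfk'

theorem isExpPoly₁_of_mul_exp_comp_mem_expPolyOfHeight (hp : p ∈ entireOfHeight 1) (hp0 : p ≠ 0)
    (hh : Differentiable ℂ h) (hph : p * exp ∘ h ∈ expPolyOfHeight k) : IsExpPoly₁ h := by
  have hp' : ∀ l, p ∈ entireOfHeight (l + 1) := fun l =>
    entireOfHeight_mono (Nat.le_add_left 1 l) hp
  induction k generalizing h with
  | zero =>
    rw [eq_const_of_mem_entireOfHeight_zero (mem_entireOfHeight_of_mul_exp_comp_eq
      (mem_entireOfHeight_of_mem_expPolyOfHeight hph) hp hh hp0 rfl)]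
    exact .const _
  | succ k ih =>
    have hh' : h ∈ entireOfHeight (k + 1) := mem_entireOfHeight_of_mul_exp_comp_eq
      (mem_entireOfHeight_of_mem_expPolyOfHeight hph) (hp' _) hh hp0 rfl
    obtain ⟨s, q, hs, hsum⟩ := exists_sum_mul_exp_sub_of_mul_exp_mem (hp' k) hh' hph
    obtain ⟨f₀, hf₀⟩ : s.Nonempty := by
      rw [Finset.nonempty_iff_ne_empty]
      rintro rfl
      exact hp0 hsum.symm
    have hmem : p * exp ∘ (h - (f₀ : ℂ → ℂ)) ∈ expPolyOfHeight k := by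
      simp only [← hsum, Finset.sum_mul, mul_assoc, ← exp_comp_add, sub_add_sub_cancel]
      refine sum_mem fun f hf => mul_mem (q f).2 ?_
      refine exp_comp_mem_expPolyOfHeight_of_mem_entireOfHeight (sub_mem f.2 f₀.2) ?_
      rw [← sub_sub_sub_cancel_right _ _ h]
      exact sub_mem (hs f hf) (hs f₀ hf₀)
    have hf₀' : IsExpPoly₁ f₀ := isExpPoly₁_of_mem_expPolyOfHeight f₀.2
    rw [← sub_add_cancel h (f₀ : ℂ → ℂ)]
    exact (ih (hh.sub (mem_entireOfHeight_of_mem_expPolyOfHeight f₀.2).1) hmem).add hf₀'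

lemma prod_sub_pow_mem_expPolyOfHeight_zero {ι : Type*} (s : Finset ι) (a : ι → ℂ) (n : ι → ℕ) :
    (fun z => ∏ i ∈ s, (z - a i) ^ n i) ∈ expPolyOfHeight 0 := by
  have hprod : (fun z => ∏ i ∈ s, (z - a i) ^ n i) =
      ∏ i ∈ s, (id - Function.const ℂ (a i)) ^ n i := by
    ext z
    simp [Finset.prod_apply]
  rw [hprod]
  exact prod_mem fun i _ =>
    pow_mem (sub_mem (id_mem_expPolyOfHeight 0) (const_mem_expPolyOfHeight 0 _)) _

end ExpPolyOfHeight

end ExpPoly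

open ExpPoly in
theorem expPoly_finitely_many_zeros (p : ℂ → ℂ) (hp : IsExpPoly₁ p)
    (m : ℕ) (hm : 0 < m) (a : Fin m → ℂ) (ha : Function.Injective a)
    (hzeros : {z : ℂ | p z = 0} = Set.range a) :
    ∃ n : Fin m → ℕ, (∀ i, 0 < n i) ∧
      ∃ g : ℂ → ℂ, IsExpPoly₁ g ∧
        ∀ z : ℂ, p z = (∏ i : Fin m, (z - a i) ^ n i) * Complex.exp (g z) := by
  have hzero_iff : ∀ z, p z = 0 ↔ z ∈ Set.range a := Set.ext_iff.1 hzeros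
  obtain ⟨k, hpk⟩ := exists_mem_expPolyOfHeight_of_isExpPoly₁ hp
  have hp0 : p ≠ 0 := by
    rintro rfl
    exact Set.infinite_univ ((Set.finite_range a).subset fun z _ => (hzero_iff z).1 rfl)
  obtain ⟨n, G, hG, hGa, hpG⟩ := exists_eq_prod_pow_mul_of_ne_zero Finset.univ a
    (mem_entireOfHeight_of_mem_expPolyOfHeight hpk).1 hp0
  have hG0 : ∀ z, G z ≠ 0 := fun z hz => by
    obtain ⟨i, rfl⟩ := (hzero_iff z).1 (by rw [hpG, hz, mul_zero])
    exact hGa i (Finset.mem_univ i) hz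
  obtain ⟨g, hg, rfl⟩ := exists_eq_exp_comp hG hG0
  refine ⟨n, fun i => ?_, g, ?_, hpG⟩
  · have hpai : p (a i) = 0 := (hzero_iff _).2 ⟨i, rfl⟩
    rw [hpG] at hpai
    exact pos_of_prod_sub_pow_eq_zero ha ((mul_eq_zero.1 hpai).resolve_right (hG0 _))
  · have hfactor := funext hpG
    refine isExpPoly₁_of_mul_exp_comp_mem_expPolyOfHeight (mem_entireOfHeight_of_mem_expPolyOfHeight
      (prod_sub_pow_mem_expPolyOfHeight_zero Finset.univ a n)) (fun h0 => hp0 ?_) hg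
      (hfactor ▸ hpk)
    rw [hfactor]
    exact funext fun z => by simp [congrFun h0 z]
end
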